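/- arXiv:1410.7727 — 2 statements merged into one kernel-verified Lean document; each statement's English description precedes it below -/
import Mathlib

section
/- For every w ∈ Max, exactly one of the following three alternatives holds for Λ = DF(w). (1) Λ is the convex hull of a finite subset of ℚ³. (2) The set E of extreme points of Λ is infinite; E has exactly one accumulation point v; v ∈ E and v ∉ ℚ³; and every point of E ∖ {v} lies in ℚ³ and is a polygonal vertex of Λ. (3) The set E of extreme points of Λ is infinite; E has exactly two accumulation points v₁ ≠ v₂; v₁, v₂ ∈ E and v₁, v₂ ∉ ℚ³; every point of E ∖ {v₁, v₂} lies in ℚ³ and is a polygonal vertex of Λ; and the line segment from v₁ to v₂ is contained in the topological boundary of Λ (relative to the plane containing Δ). -/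
open Filter Topology MeasureTheory

/-- The sequence space `Σ⁺ = {0,1,2}^ℕ` (with the product topology). -/
abbrev Seq3 := ℕ → Fin 3

/-- The shift map `σ`. -/
def shift (s : Seq3) : Seq3 := fun n => s (n + 1)

/-- The observable `κ(s) = e_{s₀}`. -/
noncomputable def kappa (s : Seq3) : Fin 3 → ℝ := fun i => if i = s 0 then 1 else 0

/-- The cocycle `κ_σ(s,r) = Σ_{i<r} κ(σⁱ s)`. -/
noncomputable def birk (s : Seq3) (r : ℕ) : Fin 3 → ℝ :=
  ∑ i ∈ Finset.range r, kappa (shift^[i] s)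

/-- The Birkhoff digit frequency of `s` exists and equals `v`. -/
def hasFreq (s : Seq3) (v : Fin 3 → ℝ) : Prop :=
  Tendsto (fun r : ℕ => (r : ℝ)⁻¹ • birk s r) atTop (nhds v)

/-- The lexicographic order on `Σ⁺`. -/
def lexLe (s t : Seq3) : Prop :=
  s = t ∨ ∃ n, (∀ i, i < n → s i = t i) ∧ s n < t n

/-- The set `Max` of maximal sequences. -/
def MaxSet : Set Seq3 := {w | w 0 = 2 ∧ ∀ r : ℕ, lexLe (shift^[r] w) w}

/-- The symbolic β-shift `B(w)`. -/
def BetaShift (w : Seq3) : Set Seq3 := {s | ∀ r : ℕ, lexLe (shift^[r] s) w}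

/-- The digit frequency set `DF(w)`. -/
def DF (w : Seq3) : Set (Fin 3 → ℝ) := {v | ∃ s ∈ BetaShift w, hasFreq s v}

/-- The Misiurewicz–Ziemian digit frequency set `DF_MZ(X)` of a subset `X ⊆ Σ⁺`. -/
def DFMZ (X : Set Seq3) : Set (Fin 3 → ℝ) :=
  {v | ∃ (s : ℕ → Seq3) (r : ℕ → ℕ), (∀ i, s i ∈ X) ∧ Tendsto r atTop atTop ∧
    Tendsto (fun i => (r i : ℝ)⁻¹ • birk (s i) (r i)) atTop (nhds v)}

/-- The standard 2-simplex `Δ ⊆ ℝ³`. -/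
def Delta : Set (Fin 3 → ℝ) := {α | (∀ i, 0 ≤ α i) ∧ α 0 + α 1 + α 2 = 1}

/-- `Δ' = {α ∈ Δ : α₂ > 0}`. -/
def Delta' : Set (Fin 3 → ℝ) := {α | α ∈ Delta ∧ 0 < α 2}

/-- `I` is the infimax sequence of `α`: the infimum, in the lexicographic order, of the
(nonempty) set of maximal sequences with digit frequency `α`; it belongs to `Max`. -/
def IsInfimax (α : Fin 3 → ℝ) (I : Seq3) : Prop :=
  {w | w ∈ MaxSet ∧ hasFreq w α}.Nonempty ∧ I ∈ MaxSet ∧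
    (∀ w, w ∈ MaxSet ∧ hasFreq w α → lexLe I w) ∧
    (∀ b : Seq3, (∀ w, w ∈ MaxSet ∧ hasFreq w α → lexLe b w) → lexLe b I)

/-- The closure of the forward `σ`-orbit of `s` (e.g. `C_α` is `orbitClosure I(α)`). -/
def orbitClosure (s : Seq3) : Set Seq3 := closure {t | ∃ r : ℕ, shift^[r] s = t}

/-- A vector in `ℝ³` is rational if all its coordinates are. -/
def IsRat (v : Fin 3 → ℝ) : Prop := ∀ i, ∃ q : ℚ, v i = (q : ℝ)

/-- A minimal set of a continuous map: a nonempty compact invariant set in which every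
point has dense forward orbit. -/
def IsMinimalSet {X : Type*} [TopologicalSpace X] (f : X → X) (C : Set X) : Prop :=
  C.Nonempty ∧ IsCompact C ∧ Set.MapsTo f C C ∧
    ∀ x ∈ C, C ⊆ closure {y | ∃ n : ℕ, f^[n] x = y}

/-- `v` is a polygonal vertex of `Λ`: near `v`, `Λ` agrees with the convex hull of `v`
and two points `a, b ∈ Λ`. -/
def IsPolygonalVertex (Λ : Set (Fin 3 → ℝ)) (v : Fin 3 → ℝ) : Prop :=
  ∃ U ∈ nhds v, ∃ a ∈ Λ, ∃ b ∈ Λ, Λ ∩ U = convexHull ℝ {v, a, b} ∩ U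


/-! ### Geometry of the continued fraction -/

noncomputable def stp (n : ℕ) (x : Fin 3 → ℝ) : Fin 3 → ℝ :=
  ![x 1, x 0 - n * x 2, x 2 - (x 0 - n * x 2)]

noncomputable def st (n : ℕ → ℕ) : ℕ → (Fin 3 → ℝ) → (Fin 3 → ℝ)
  | 0, x => x
  | k + 1, x => stp (n k) (st n k x)

noncomputable def bg (n : ℕ → ℕ) : ℕ → (Fin 3 → ℝ) × (Fin 3 → ℝ) × (Fin 3 → ℝ)
  | 0 => (![1, 0, 0], ![0, 1, 0], ![0, 0, 1])
  | k + 1 => ((bg n k).2.1, (bg n k).1 + ((bg n k).2.2 + (n k : ℝ) • (bg n k).1),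
      (bg n k).2.2 + (n k : ℝ) • (bg n k).1)

noncomputable def be (n : ℕ → ℕ) (k : ℕ) : Fin 3 → ℝ := (bg n k).1
noncomputable def ga (n : ℕ → ℕ) (k : ℕ) : Fin 3 → ℝ := (bg n k).2.2

def sm (x : Fin 3 → ℝ) : ℝ := x 0 + x 1 + x 2

noncomputable def bh (n : ℕ → ℕ) (k : ℕ) : Fin 3 → ℝ := (sm (be n k))⁻¹ • be n k

lemma ga_succ (n : ℕ → ℕ) (k : ℕ) : ga n (k + 1) = ga n k + (n k : ℝ) • be n k := rfl
lemma be_succ_succ (n : ℕ → ℕ) (k : ℕ) : be n (k + 2) = be n k + ga n (k + 1) := rfl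

lemma sm_add (x y : Fin 3 → ℝ) : sm (x + y) = sm x + sm y := by simp [sm]; ring
lemma sm_smul (a : ℝ) (x : Fin 3 → ℝ) : sm (a • x) = a * sm x := by simp [sm]; ring

lemma st_comb (n : ℕ → ℕ) (k : ℕ) (a b : ℝ) (x y : Fin 3 → ℝ) :
    st n k (a • x + b • y) = a • st n k x + b • st n k y := by
  induction k with
  | zero => rfl
  | succ k ih =>
    simp only [st, ih]
    ext i
    fin_cases i <;> simp [stp] <;> ring

lemma st_smul (n : ℕ → ℕ) (k : ℕ) (a : ℝ) (x : Fin 3 → ℝ) :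
    st n k (a • x) = a • st n k x := by
  have := st_comb n k a 0 x x
  simpa using this

lemma st_add (n : ℕ → ℕ) (k : ℕ) (x y : Fin 3 → ℝ) :
    st n k (x + y) = st n k x + st n k y := by
  have := st_comb n k 1 1 x y
  simpa using this

lemma st_cont (n : ℕ → ℕ) (k : ℕ) : Continuous (st n k) := by
  induction k with
  | zero => exact continuous_id
  | succ k ih =>
    have h : Continuous (stp (n k)) := by
      unfold stp
      fun_prop
    exact h.comp ih

lemma st_cont_i (n : ℕ → ℕ) (k : ℕ) (i : Fin 3) : Continuous (fun x => st n k x i) :=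
  (continuous_apply i).comp (st_cont n k)

lemma st1 (n : ℕ → ℕ) (k : ℕ) (x : Fin 3 → ℝ) : st n k x 1 = st n (k + 1) x 0 := rfl
lemma stH (n : ℕ → ℕ) (k : ℕ) (x : Fin 3 → ℝ) :
    st n (k + 2) x 0 = st n k x 0 - n k * st n k x 2 := rfl
lemma stf (n : ℕ → ℕ) (k : ℕ) (x : Fin 3 → ℝ) :
    st n (k + 1) x 2 = st n k x 2 - st n (k + 2) x 0 := rfl

lemma decomp (n : ℕ → ℕ) (k : ℕ) (x : Fin 3 → ℝ) :
    x = st n k x 0 • be n k + st n (k + 1) x 0 • be n (k + 1) + st n k x 2 • ga n k := by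
  induction k with
  | zero =>
    ext i
    fin_cases i <;> simp [st, be, bg, ga, stp]
  | succ k ih =>
    conv_lhs => rw [ih]
    rw [stf, stH, be_succ_succ, ga_succ]
    ext i
    simp
    ring

lemma st_basis (n : ℕ → ℕ) (k : ℕ) : st n k (be n k) = ![1, 0, 0] ∧
    st n k (be n (k + 1)) = ![0, 1, 0] ∧ st n k (ga n k) = ![0, 0, 1] := by
  induction k with
  | zero => simp [st, be, ga, bg]
  | succ k ih =>
    obtain ⟨h0, h1, h2⟩ := ih
    have hg : st n (k + 1) (ga n (k + 1)) = ![0, 0, 1] := by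
      rw [ga_succ, st_add, st_smul]
      simp only [st, h0, h2]
      ext i
      fin_cases i <;> simp [stp]
    refine ⟨?_, ?_, hg⟩
    · simp only [st, h1]; ext i; fin_cases i <;> simp [stp]
    · rw [be_succ_succ, st_add, hg]
      simp only [st, h0]
      ext i; fin_cases i <;> simp [stp]

lemma be_ga_nonneg (n : ℕ → ℕ) (k : ℕ) : (∀ i, 0 ≤ be n k i) ∧ (∀ i, 0 ≤ be n (k + 1) i) ∧
    (∀ i, 0 ≤ ga n k i) := by
  induction k with
  | zero =>
    refine ⟨?_, ?_, ?_⟩ <;> intro i <;> fin_cases i <;> simp [be, ga, bg]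
  | succ k ih =>
    obtain ⟨h0, h1, h2⟩ := ih
    have hg : ∀ i, 0 ≤ ga n (k + 1) i := by
      intro i
      rw [ga_succ]
      simp only [Pi.add_apply, Pi.smul_apply, smul_eq_mul]
      have := h0 i
      have := h2 i
      positivity
    refine ⟨h1, ?_, hg⟩
    intro i
    rw [be_succ_succ]
    exact add_nonneg (h0 i) (hg i)

lemma be_nonneg (n : ℕ → ℕ) (k : ℕ) (i : Fin 3) : 0 ≤ be n k i := (be_ga_nonneg n k).1 i
lemma ga_nonneg (n : ℕ → ℕ) (k : ℕ) (i : Fin 3) : 0 ≤ ga n k i := (be_ga_nonneg n k).2.2 i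

lemma sm_nonneg {x : Fin 3 → ℝ} (h : ∀ i, 0 ≤ x i) : 0 ≤ sm x := by
  have := h 0
  have := h 1
  have := h 2
  unfold sm; linarith

lemma ga2 (n : ℕ → ℕ) (k : ℕ) : 1 ≤ ga n k 2 := by
  induction k with
  | zero => simp [ga, bg]
  | succ k ih =>
    rw [ga_succ]
    simp only [Pi.add_apply, Pi.smul_apply, smul_eq_mul]
    have := be_nonneg n k 2
    have : 0 ≤ (n k : ℝ) * be n k 2 := by positivity
    linarith

lemma sm_ga (n : ℕ → ℕ) (k : ℕ) : 1 ≤ sm (ga n k) := by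
  have := ga2 n k
  have := ga_nonneg n k 0
  have := ga_nonneg n k 1
  unfold sm; linarith

lemma be2 (n : ℕ → ℕ) (k : ℕ) : 1 ≤ be n (k + 2) 2 := by
  rw [be_succ_succ]
  have := ga2 n (k + 1)
  have := be_nonneg n k 2
  simp only [Pi.add_apply]; linarith

lemma sm_be_succ (n : ℕ → ℕ) (k : ℕ) : sm (be n k) + 1 ≤ sm (be n (k + 2)) := by
  rw [be_succ_succ, sm_add]
  linarith [sm_ga n (k + 1)]

lemma sm_be_pos : ∀ (n : ℕ → ℕ) (k : ℕ), 1 ≤ sm (be n k)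
  | n, 0 => by simp [be, bg, sm]
  | n, 1 => by simp [be, bg, sm]
  | n, k + 2 => by
    have := sm_be_succ n k
    have := sm_be_pos n k
    linarith

lemma sm_be_ge (n : ℕ → ℕ) (k i : ℕ) : (i : ℝ) ≤ sm (be n (k + 2 * i)) := by
  induction i with
  | zero => have := sm_be_pos n k; simp; linarith
  | succ i ih =>
    have := sm_be_succ n (k + 2 * i)
    rw [show k + 2 * (i + 1) = k + 2 * i + 2 by ring]
    push_cast
    linarith

lemma sm_bh (n : ℕ → ℕ) (k : ℕ) : sm (bh n k) = 1 := by
  have := sm_be_pos n k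
  rw [bh, sm_smul]
  exact inv_mul_cancel₀ (by linarith)

lemma be_eq_bh (n : ℕ → ℕ) (k : ℕ) : be n k = sm (be n k) • bh n k := by
  have := sm_be_pos n k
  rw [bh, smul_smul, mul_inv_cancel₀ (by linarith), one_smul]

/-- bracket of the last two coordinates -/
def brk (u v : Fin 3 → ℝ) : ℝ := u 1 * v 2 - u 2 * v 1

lemma brk_signs (n : ℕ → ℕ) (m : ℕ) :
    0 ≤ (-1 : ℝ) ^ m * brk (be n (m + 1)) (ga n (m + 1)) ∧
    0 ≤ -(-1 : ℝ) ^ m * brk (be n m) (ga n m) ∧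
    0 ≤ -(-1 : ℝ) ^ m * brk (be n m) (be n (m + 1)) := by
  induction m with
  | zero =>
    simp [be, ga, bg, brk]
  | succ m ih =>
    obtain ⟨h1, h2, h3⟩ := ih
    have e1 : brk (be n (m + 1)) (be n (m + 2)) =
        brk (be n (m + 1)) (ga n (m + 1)) - brk (be n m) (be n (m + 1)) := by
      rw [be_succ_succ]; simp only [brk, Pi.add_apply]; ring
    have e2 : brk (be n (m + 2)) (ga n (m + 2)) =
        brk (be n m) (ga n m) - n (m + 1) * brk (be n (m + 1)) (be n (m + 2)) := by
      rw [be_succ_succ, ga_succ n (m + 1), ga_succ n m]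
      simp only [brk, Pi.add_apply, Pi.smul_apply, smul_eq_mul]; ring
    have h4 : 0 ≤ -(-1 : ℝ) ^ (m + 1) * brk (be n (m + 1)) (be n (m + 2)) := by
      rw [e1, pow_succ]; linarith
    refine ⟨?_, ?_, h4⟩
    · rw [show m + 1 + 1 = m + 2 by rfl, e2]
      have : 0 ≤ (n (m + 1) : ℝ) * (-(-1 : ℝ) ^ (m + 1) * brk (be n (m + 1)) (be n (m + 2))) :=
        mul_nonneg (Nat.cast_nonneg _) h4
      rw [pow_succ] at this ⊢
      linarith
    · rw [pow_succ]; linarith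

/-- ratio used to order the vertices -/
noncomputable def rho (x : Fin 3 → ℝ) : ℝ := x 1 / (x 1 + x 2)

lemma rho_mono_of_brk {u v : Fin 3 → ℝ} (hu1 : 0 ≤ u 1) (hu2 : 0 < u 2) (hv1 : 0 ≤ v 1)
    (hv2 : 0 < v 2) (h : 0 ≤ brk u v) : rho v ≤ rho u := by
  unfold rho brk at *
  rw [div_le_div_iff₀ (by linarith) (by linarith)]
  nlinarith

lemma brk_be (n : ℕ → ℕ) (m : ℕ) :
    0 ≤ (-1 : ℝ) ^ m * brk (be n (m + 1)) (be n (m + 3)) := by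
  have h := (brk_signs n m).1
  have : brk (be n (m + 1)) (be n (m + 3)) = brk (be n (m + 1)) (ga n (m + 1)) := by
    rw [be_succ_succ n (m + 1), ga_succ n (m + 1)]
    simp only [brk, Pi.add_apply, Pi.smul_apply, smul_eq_mul]; ring
  rwa [this]

lemma rho_bh (n : ℕ → ℕ) (k : ℕ) : rho (bh n k) = rho (be n k) := by
  have := sm_be_pos n k
  have h : (sm (be n k))⁻¹ ≠ 0 := inv_ne_zero (by linarith)
  unfold rho bh
  simp only [Pi.smul_apply, smul_eq_mul]
  rw [← mul_add, mul_div_mul_left _ _ h]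

lemma rho_even (n : ℕ → ℕ) : Monotone (fun i : ℕ => rho (bh n (2 * i + 2))) := by
  refine monotone_nat_of_le_succ fun i => ?_
  rw [rho_bh, rho_bh]
  have := brk_be n (2 * i + 1)
  have h2 := be2 n (2 * i)
  have h3 := be2 n (2 * (i + 1))
  rw [Odd.neg_one_pow ⟨i, rfl⟩] at this
  have h : 0 ≤ brk (be n (2 * i + 4)) (be n (2 * i + 2)) := by
    unfold brk at *; linarith
  exact rho_mono_of_brk (be_nonneg _ _ _) (by linarith) (be_nonneg _ _ _) (by linarith) h

lemma rho_odd (n : ℕ → ℕ) : Antitone (fun i : ℕ => rho (bh n (2 * i + 3))) := by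
  refine antitone_nat_of_succ_le fun i => ?_
  rw [rho_bh, rho_bh]
  have := brk_be n (2 * i + 2)
  have h2 := be2 n (2 * i + 1)
  have h3 := be2 n (2 * (i + 1) + 1)
  rw [Even.neg_one_pow ⟨i + 1, by ring⟩, one_mul] at this
  exact rho_mono_of_brk (be_nonneg _ _ _) (by linarith) (be_nonneg _ _ _) (by linarith) this

structure Geo (n : ℕ → ℕ) (Λ : Set (Fin 3 → ℝ)) : Prop where
  hn : ∀ K, ∃ k, K ≤ k ∧ 1 ≤ n k
  hc : IsCompact Λ
  hconv : Convex ℝ Λ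
  hs : ∀ x ∈ Λ, sm x = 1
  hH : ∀ x ∈ Λ, ∀ k, 0 ≤ st n k x 0
  hf : ∀ x ∈ Λ, 0 ≤ x 2
  hb : ∀ k, bh n k ∈ Λ

/-- the limit face -/
def LF (n : ℕ → ℕ) (Λ : Set (Fin 3 → ℝ)) : Set (Fin 3 → ℝ) := {x ∈ Λ | ∀ k, 0 ≤ st n k x 2}

namespace Geo
variable {n : ℕ → ℕ} {Λ : Set (Fin 3 → ℝ)}

lemma anti (G : Geo n Λ) {x : Fin 3 → ℝ} (hx : x ∈ Λ) : Antitone (fun k => st n k x 2) := by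
  refine antitone_nat_of_succ_le fun k => ?_
  rw [stf]
  linarith [G.hH x hx (k + 2)]

lemma f_tendsto (G : Geo n Λ) {x : Fin 3 → ℝ} (hx : x ∈ LF n Λ) :
    Tendsto (fun k => st n k x 2) atTop (𝓝 0) := by
  have hA := G.anti hx.1
  have hbd : BddBelow (Set.range (fun k => st n k x 2)) := ⟨0, by rintro _ ⟨k, rfl⟩; exact hx.2 k⟩
  have ht := tendsto_atTop_ciInf hA hbd
  set l := ⨅ k, st n k x 2 with hl
  have hl0 : 0 ≤ l := le_ciInf fun k => hx.2 k
  have hle : ∀ k, l ≤ st n k x 2 := fun k => ciInf_le hbd k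
  rcases hl0.eq_or_lt with h | h
  · rwa [← h] at ht
  exfalso
  have hH2 : Tendsto (fun k => st n (k + 2) x 0) atTop (𝓝 0) := by
    have := ht.sub (ht.comp (tendsto_add_atTop_nat 1))
    simp only [sub_self] at this
    refine this.congr fun k => ?_
    simp only [Function.comp, stf]; ring
  have hH0 : Tendsto (fun k => st n k x 0) atTop (𝓝 0) := (tendsto_add_atTop_iff_nat 2).1 hH2
  have hd : Tendsto (fun k => st n k x 0 - st n (k + 2) x 0) atTop (𝓝 0) := by
    simpa using hH0.sub hH2
  obtain ⟨K, hK⟩ := (hd.eventually (gt_mem_nhds h)).exists_forall_of_atTop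
  obtain ⟨k, hk, hnk⟩ := G.hn K
  have h1 := hK k hk
  rw [stH] at h1
  have h2 := hle k
  have h3 : (1 : ℝ) ≤ n k := by exact_mod_cast hnk
  nlinarith

lemma f_zero_imp (n : ℕ → ℕ) {x : Fin 3 → ℝ} {k : ℕ} (h : ∀ j, k ≤ j → st n j x 2 = 0) : x = 0 := by
  have hH : ∀ j, k ≤ j → st n (j + 2) x 0 = 0 := by
    intro j hj
    have := stf n j x
    rw [h j hj, h (j + 1) (by omega)] at this
    linarith
  have hH' : ∀ j, k ≤ j → st n j x 0 = 0 := by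
    intro j hj
    have := stH n j x
    rw [h j hj, hH j hj] at this
    linarith
  have := decomp n k x
  rw [h k le_rfl, hH' k le_rfl, hH' (k + 1) (by omega)] at this
  simpa using this

lemma f_pos (G : Geo n Λ) {x : Fin 3 → ℝ} (hx : x ∈ LF n Λ) (k : ℕ) : 0 < st n k x 2 := by
  rcases (hx.2 k).eq_or_lt with h | h
  · exfalso
    have h0 : x = 0 := by
      refine f_zero_imp n (k := k) fun j hj => ?_
      have := G.anti hx.1 hj
      have h3 := hx.2 j
      simp only at this
      linarith
    have := G.hs x hx.1
    rw [h0] at this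
    simp [sm] at this
  · exact h

lemma face' (G : Geo n Λ) {y z : Fin 3 → ℝ} {a b : ℝ} (ha : 0 < a) (hb : 0 < b)
    (hy : y ∈ Λ) (hz : z ∈ Λ) (hx : a • y + b • z ∈ LF n Λ) : y ∈ LF n Λ := by
  refine ⟨hy, fun k => ?_⟩
  by_contra hneg
  push Not at hneg
  have hy2 : ∀ j, k ≤ j → st n j y 2 ≤ st n k y 2 := fun j hj => G.anti hy hj
  have hz2 : ∀ j, k ≤ j → -(a * st n k y 2) / b ≤ st n j z 2 := by
    intro j hj
    have h1 := hx.2 j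
    rw [st_comb] at h1
    simp only [Pi.add_apply, Pi.smul_apply, smul_eq_mul] at h1
    rw [div_le_iff₀ hb]
    nlinarith [hy2 j hj]
  have hpos : 0 < -(a * st n k y 2) / b := by
    apply div_pos _ hb
    nlinarith
  have hzL : z ∈ LF n Λ := by
    refine ⟨hz, fun j => ?_⟩
    rcases le_total k j with h | h
    · linarith [hz2 j h]
    · have := G.anti hz h
      have := hz2 k le_rfl
      simp only at *
      linarith
  have := G.f_tendsto hzL
  have := ge_of_tendsto this (Filter.eventually_atTop.2 ⟨k, hz2⟩)
  linarith

lemma face (G : Geo n Λ) {x y z : Fin 3 → ℝ} (hy : y ∈ Λ) (hz : z ∈ Λ) (hx : x ∈ LF n Λ)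
    (h : x ∈ openSegment ℝ y z) : y ∈ LF n Λ ∧ z ∈ LF n Λ := by
  obtain ⟨a, b, ha, hb, hab, rfl⟩ := h
  exact ⟨G.face' ha hb hy hz hx, G.face' hb ha hz hy (by rwa [add_comm])⟩

lemma st_bh (n : ℕ → ℕ) (k : ℕ) : st n k (bh n k) = ![(sm (be n k))⁻¹, 0, 0] := by
  rw [bh, st_smul, (st_basis n k).1]
  ext i; fin_cases i <;> simp

lemma st_bh' (n : ℕ → ℕ) (k : ℕ) : st n k (bh n (k + 1)) = ![0, (sm (be n (k + 1)))⁻¹, 0] := by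
  rw [bh, st_smul, (st_basis n k).2.1]
  ext i; fin_cases i <;> simp

lemma bh_neg (n : ℕ → ℕ) (k : ℕ) : st n (k + 1) (bh n k) 2 < 0 := by
  rw [stf, stH, st_bh]
  have := sm_be_pos n k
  have : 0 < (sm (be n k))⁻¹ := inv_pos.2 (by linarith)
  simp
  linarith

lemma bh_nonneg (G : Geo n Λ) {k j : ℕ} (h : k ≤ j) : 0 ≤ st n k (bh n j) 2 := by
  have := G.anti (G.hb j) h
  simp only [st_bh] at this
  simpa using this

lemma bh_not_mem (n : ℕ → ℕ) (Λ : Set (Fin 3 → ℝ)) (k : ℕ) : bh n k ∉ LF n Λ := fun h => by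
  have := h.2 (k + 1)
  linarith [bh_neg n k]

lemma bh_inj (G : Geo n Λ) : Function.Injective (bh n) := by
  have key : ∀ i j, i < j → bh n i ≠ bh n j := by
    intro i j hij h
    have h1 := bh_neg n i
    have h2 := G.bh_nonneg (show i + 1 ≤ j from hij)
    rw [← h] at h2
    linarith
  intro i j h
  rcases lt_trichotomy i j with h1 | h1 | h1
  · exact absurd h (key _ _ h1)
  · exact h1
  · exact absurd h.symm (key _ _ h1)

lemma LF_convex (G : Geo n Λ) : Convex ℝ (LF n Λ) := by
  intro x hx y hy a b ha hb hab
  refine ⟨G.hconv hx.1 hy.1 ha hb hab, fun k => ?_⟩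
  rw [st_comb]
  have := hx.2 k
  have := hy.2 k
  simp only [Pi.add_apply, Pi.smul_apply, smul_eq_mul]
  positivity

lemma LF_closed (G : Geo n Λ) : IsClosed (LF n Λ) := by
  have : LF n Λ = Λ ∩ ⋂ k, {x | 0 ≤ st n k x 2} := by
    ext x; simp [LF]
  rw [this]
  exact G.hc.isClosed.inter (isClosed_iInter fun k => isClosed_le continuous_const (st_cont_i n k 2))

lemma cluster_mem (G : Geo n Λ) {x : Fin 3 → ℝ} {g : ℕ → ℕ} (hg : Tendsto g atTop atTop)
    (hx : MapClusterPt x atTop (fun i => bh n (g i))) : x ∈ LF n Λ := by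
  refine ⟨?_, fun k => ?_⟩
  · exact G.hc.isClosed.mem_of_mapClusterPt hx (Eventually.of_forall fun i => G.hb _)
  · have hcl : IsClosed {x | 0 ≤ st n k x 2} := isClosed_le continuous_const (st_cont_i n k 2)
    exact hcl.mem_of_mapClusterPt hx ((hg.eventually_ge_atTop k).mono fun i hi => G.bh_nonneg hi)

lemma eq_of_brk (G : Geo n Λ) {x y : Fin 3 → ℝ} (hx : x ∈ LF n Λ) (hy : y ∈ LF n Λ)
    (h : rho x = rho y) : x = y := by
  have hx2 : 0 < x 2 := G.f_pos hx 0
  have hy2 : 0 < y 2 := G.f_pos hy 0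
  have hx1 : 0 ≤ x 1 := G.hH x hx.1 1
  have hy1 : 0 ≤ y 1 := G.hH y hy.1 1
  have hxs := G.hs x hx.1
  have hys := G.hs y hy.1
  have hb : x 1 * y 2 = y 1 * x 2 := by
    unfold rho at h
    rw [div_eq_div_iff (by linarith) (by linarith)] at h
    linarith
  have key : ∀ x y : Fin 3 → ℝ, x ∈ LF n Λ → y ∈ LF n Λ → sm x = 1 → sm y = 1 →
      0 < x 2 → 0 < y 2 → x 1 * y 2 = y 1 * x 2 → ¬ x 2 < y 2 := by
    intro x y hx hy hxs hys hx2 hy2 hb hlt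
    have hbx : bh n 0 = ![1, 0, 0] := by
      simp [bh, be, bg, sm]
    have : x ∈ openSegment ℝ (bh n 0) y := by
      refine ⟨1 - x 2 / y 2, x 2 / y 2, ?_, by positivity, by ring, ?_⟩
      · rw [sub_pos, div_lt_one hy2]; exact hlt
      · rw [hbx]
        have e2 : x 2 / y 2 * y 2 = x 2 := by field_simp
        have e1 : x 2 / y 2 * y 1 = x 1 := by field_simp; linarith
        unfold sm at hxs hys
        have e0 : 1 - x 2 / y 2 + x 2 / y 2 * y 0 = x 0 := by
          have : y 0 = 1 - y 1 - y 2 := by linarith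
          rw [this]; linarith
        ext i; fin_cases i
        · simpa using e0
        · simpa using e1
        · simpa using e2
    exact bh_not_mem n Λ 0 (G.face (G.hb 0) hy.1 hx this).1
  have e2 : x 2 = y 2 := by
    rcases lt_trichotomy (x 2) (y 2) with h | h | h
    · exact absurd h (key x y hx hy hxs hys hx2 hy2 hb)
    · exact h
    · exact absurd h (key y x hy hx hys hxs hy2 hx2 hb.symm)
  have e1 : x 1 = y 1 := by
    rw [e2] at hb; exact mul_right_cancel₀ hy2.ne' hb
  unfold sm at hxs hys
  ext i; fin_cases i
  · show x 0 = y 0; linarith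
  · exact e1
  · exact e2

lemma rho_mem {x : Fin 3 → ℝ} (h1 : 0 ≤ x 1) (h2 : 0 ≤ x 2) : 0 ≤ rho x ∧ rho x ≤ 1 := by
  unfold rho
  exact ⟨by positivity, div_le_one_of_le₀ (by linarith) (by linarith)⟩

lemma conv_of_rho (G : Geo n Λ) {g : ℕ → ℕ} (hg : Tendsto g atTop atTop) {l : ℝ}
    (hl : Tendsto (fun i => rho (bh n (g i))) atTop (𝓝 l)) :
    ∃ v ∈ LF n Λ, Tendsto (fun i => bh n (g i)) atTop (𝓝 v) := by
  have hmem : ∀ i, bh n (g i) ∈ Λ := fun i => G.hb _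
  have hrho : ∀ x, MapClusterPt x atTop (fun i => bh n (g i)) → x ∈ LF n Λ ∧ rho x = l := by
    intro x hx
    have hxL := G.cluster_mem hg hx
    refine ⟨hxL, ?_⟩
    have hx2 : 0 < x 2 := G.f_pos hxL 0
    have hx1 : 0 ≤ x 1 := G.hH x hxL.1 1
    have hcont : ContinuousAt rho x := by
      unfold rho
      have c1 : ContinuousAt (fun x : Fin 3 → ℝ => x 1) x := (continuous_apply 1).continuousAt
      have c2 : ContinuousAt (fun x : Fin 3 → ℝ => x 2) x := (continuous_apply 2).continuousAt
      exact ContinuousAt.div c1 (c1.add c2) (by linarith)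
    obtain ⟨ψ, hψ, hψ2⟩ := hx.tendsto_subseq
    have h2 := hcont.tendsto.comp hψ2
    exact tendsto_nhds_unique h2 (hl.comp hψ.tendsto_atTop)
  obtain ⟨v, hvΛ, hv⟩ := G.hc.exists_mapClusterPt (u := fun i => bh n (g i)) (f := atTop)
    (by simp; exact ⟨0, fun i _ => hmem i⟩)
  refine ⟨v, (hrho v hv).1, ?_⟩
  refine G.hc.tendsto_nhds_of_unique_mapClusterPt (Eventually.of_forall hmem) ?_
  intro y hy hyc
  exact G.eq_of_brk (hrho y hyc).1 (hrho v hv).1 (by rw [(hrho y hyc).2, (hrho v hv).2])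

lemma exists_even (G : Geo n Λ) : ∃ v ∈ LF n Λ, Tendsto (fun i => bh n (2 * i + 2)) atTop (𝓝 v) := by
  refine G.conv_of_rho (tendsto_atTop_mono (fun i => by omega : ∀ i, i ≤ 2 * i + 2) tendsto_id)
    (tendsto_atTop_ciSup (rho_even n) ⟨1, ?_⟩)
  rintro _ ⟨i, rfl⟩
  exact (rho_mem (G.hH _ (G.hb _) 1) (G.hf _ (G.hb _))).2

lemma exists_odd (G : Geo n Λ) : ∃ v ∈ LF n Λ, Tendsto (fun i => bh n (2 * i + 3)) atTop (𝓝 v) := by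
  refine G.conv_of_rho (tendsto_atTop_mono (fun i => by omega : ∀ i, i ≤ 2 * i + 3) tendsto_id)
    (tendsto_atTop_ciInf (rho_odd n) ⟨0, ?_⟩)
  rintro _ ⟨i, rfl⟩
  exact (rho_mem (G.hH _ (G.hb _) 1) (G.hf _ (G.hb _))).1

end Geo

namespace Geo
variable {n : ℕ → ℕ} {Λ : Set (Fin 3 → ℝ)}

lemma bh_ev {ve vo : Fin 3 → ℝ} (he : Tendsto (fun i => bh n (2 * i + 2)) atTop (𝓝 ve))
    (ho : Tendsto (fun i => bh n (2 * i + 3)) atTop (𝓝 vo)) {U : Set (Fin 3 → ℝ)}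
    (hUe : U ∈ 𝓝 ve) (hUo : U ∈ 𝓝 vo) : ∃ K, ∀ k, K ≤ k → bh n k ∈ U := by
  obtain ⟨K1, h1⟩ := (he.eventually hUe).exists_forall_of_atTop
  obtain ⟨K2, h2⟩ := (ho.eventually hUo).exists_forall_of_atTop
  refine ⟨2 * K1 + 2 * K2 + 4, fun k hk => ?_⟩
  rcases Nat.even_or_odd' k with ⟨c, hc | hc⟩
  · obtain ⟨d, rfl⟩ : ∃ d, c = d + 1 := ⟨c - 1, by omega⟩
    have := h1 d (by omega)
    rw [hc]; exact this
  · obtain ⟨d, rfl⟩ : ∃ d, c = d + 1 := ⟨c - 1, by omega⟩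
    have := h2 d (by omega)
    rw [hc]; exact this

lemma LF_sub_segment (G : Geo n Λ) {ve vo : Fin 3 → ℝ}
    (he : Tendsto (fun i => bh n (2 * i + 2)) atTop (𝓝 ve))
    (ho : Tendsto (fun i => bh n (2 * i + 3)) atTop (𝓝 vo)) : LF n Λ ⊆ segment ℝ ve vo := by
  intro x hx
  by_contra hns
  have hcl : IsClosed (segment ℝ ve vo) := by
    rw [← convexHull_pair]
    exact ((Set.toFinite {ve, vo}).isCompact_convexHull (𝕜 := ℝ)).isClosed
  obtain ⟨φ, u, h1, h2⟩ := geometric_hahn_banach_closed_point (convex_segment ve vo) hcl hns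
  have hU : IsOpen {y | φ y < u} := isOpen_lt φ.continuous continuous_const
  obtain ⟨K, hK⟩ := bh_ev (n := n) he ho (U := {y | φ y < u})
    (hU.mem_nhds (h1 _ (left_mem_segment ℝ ve vo))) (hU.mem_nhds (h1 _ (right_mem_segment ℝ ve vo)))
  let ψ : (Fin 3 → ℝ) → ℝ := fun y => φ y - u * sm y
  have hadd : ∀ a b, ψ (a + b) = ψ a + ψ b := by
    intro a b; simp only [ψ, map_add, sm_add]; ring
  have hsmul : ∀ (c : ℝ) a, ψ (c • a) = c * ψ a := by
    intro a b; simp only [ψ, map_smul, sm_smul, smul_eq_mul]; ring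
  have hbe : ∀ k, K ≤ k → ψ (be n k) ≤ 0 := by
    intro k hk
    rw [be_eq_bh, hsmul]
    have h3 : φ (bh n k) < u := hK k hk
    have h4 : ψ (bh n k) ≤ 0 := by simp only [ψ, sm_bh]; linarith
    have := sm_be_pos n k
    nlinarith
  have hga : ∀ k, K ≤ k → ψ (ga n k) ≤ ψ (ga n K) := by
    intro k hk
    induction k, hk using Nat.le_induction with
    | base => exact le_rfl
    | succ k hk ih =>
      rw [ga_succ, hadd, hsmul]
      have := hbe k hk
      have h5 : (0 : ℝ) ≤ n k := Nat.cast_nonneg _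
      nlinarith
  have hψx : 0 < ψ x := by
    simp only [ψ, G.hs x hx.1]; linarith
  have hle : ∀ k, K ≤ k → ψ x ≤ st n k x 2 * ψ (ga n K) := by
    intro k hk
    have hd := decomp n k x
    have : ψ x = st n k x 0 * ψ (be n k) + st n (k + 1) x 0 * ψ (be n (k + 1)) +
        st n k x 2 * ψ (ga n k) := by
      conv_lhs => rw [hd]
      rw [hadd, hadd, hsmul, hsmul, hsmul]
    rw [this]
    have a1 := G.hH x hx.1 k
    have a2 := G.hH x hx.1 (k + 1)
    have a3 := hx.2 k
    have b1 := hbe k hk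
    have b2 := hbe (k + 1) (by omega)
    have b3 := hga k hk
    nlinarith [mul_nonneg a1 (neg_nonneg.2 b1), mul_nonneg a2 (neg_nonneg.2 b2),
      mul_nonneg a3 (sub_nonneg.2 b3)]
  have ht : Tendsto (fun k => st n k x 2 * ψ (ga n K)) atTop (𝓝 (0 * ψ (ga n K))) :=
    (G.f_tendsto hx).mul_const _
  have := ge_of_tendsto ht (eventually_atTop.2 ⟨K, hle⟩)
  linarith

lemma ext_left (G : Geo n Λ) {a b : Fin 3 → ℝ} (ha : a ∈ LF n Λ)
    (hL : LF n Λ ⊆ segment ℝ a b) : a ∈ Set.extremePoints ℝ Λ := by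
  rw [mem_extremePoints]
  refine ⟨ha.1, fun y hy z hz hx => ?_⟩
  obtain ⟨h1, h2⟩ := G.face hy hz ha hx
  have h1 := hL h1
  have h2 := hL h2
  rw [segment_eq_image'] at h1 h2
  obtain ⟨s, hs, rfl⟩ := h1
  obtain ⟨t, ht, rfl⟩ := h2
  obtain ⟨p, q, hp, hq, hpq, e⟩ := hx
  have e2 : (p * s + q * t) • (b - a) = 0 := by
    have e' : a + (p * s + q * t) • (b - a) = a := by
      conv_rhs => rw [← e]
      have : (p + q) • a + (p * s + q * t) • (b - a) =
        p • (a + s • (b - a)) + q • (a + t • (b - a)) := by module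
      rw [← this, hpq, one_smul]
    simpa using e'
  rcases smul_eq_zero.1 e2 with h | h
  · have hs0 : s = 0 := by
      have := mul_nonneg hp.le hs.1
      have := mul_nonneg hq.le ht.1
      have : p * s = 0 := by linarith
      rcases mul_eq_zero.1 this with h | h
      · linarith
      · exact h
    have ht0 : t = 0 := by
      have := mul_nonneg hp.le hs.1
      have := mul_nonneg hq.le ht.1
      have : q * t = 0 := by linarith
      rcases mul_eq_zero.1 this with h | h
      · linarith
      · exact h
    simp [hs0, ht0]
  · simp [h]

lemma ext_LF {a b u : Fin 3 → ℝ} (ha : a ∈ LF n Λ) (hb : b ∈ LF n Λ)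
    (hL : LF n Λ ⊆ segment ℝ a b) (hu : u ∈ LF n Λ) (hE : u ∈ Set.extremePoints ℝ Λ) :
    u = a ∨ u = b := by
  have h := hL hu
  have := (mem_extremePoints_iff_forall_segment.1 hE).2 a ha.1 b hb.1 h
  tauto

lemma not_rat (G : Geo n Λ) {x : Fin 3 → ℝ} (hx : x ∈ LF n Λ) : ¬ IsRat x := by
  intro hr
  choose q hq using hr
  obtain ⟨N, hN, hint⟩ : ∃ N : ℕ, 0 < N ∧ ∀ i, ∃ z : ℤ, (N : ℝ) * x i = z := by
    refine ⟨∏ i, (q i).den, Finset.prod_pos fun i _ => (q i).pos, fun i => ?_⟩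
    refine ⟨(∏ j ∈ Finset.univ.erase i, ((q j).den : ℤ)) * (q i).num, ?_⟩
    rw [hq i, ← Finset.mul_prod_erase _ _ (Finset.mem_univ i)]
    have h1 : ((q i).den : ℝ) * (q i : ℝ) = (q i).num := by
      have := Rat.den_mul_eq_num (q i)
      exact_mod_cast this
    push_cast
    rw [← h1]; ring
  have hst : ∀ k i, ∃ z : ℤ, (N : ℝ) * st n k x i = z := by
    intro k
    induction k with
    | zero => exact hint
    | succ k ih =>
      obtain ⟨z0, h0⟩ := ih 0
      obtain ⟨z1, h1⟩ := ih 1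
      obtain ⟨z2, h2⟩ := ih 2
      intro i
      fin_cases i
      · exact ⟨z1, h1⟩
      · refine ⟨z0 - n k * z2, ?_⟩
        show (N : ℝ) * (st n k x 0 - n k * st n k x 2) = _
        push_cast; rw [← h0, ← h2]; ring
      · refine ⟨z2 - (z0 - n k * z2), ?_⟩
        show (N : ℝ) * (st n k x 2 - (st n k x 0 - n k * st n k x 2)) = _
        push_cast; rw [← h0, ← h2]; ring
  have h1 : ∀ k, 1 / (N : ℝ) ≤ st n k x 2 := by
    intro k
    obtain ⟨z, hz⟩ := hst k 2
    have hp := G.f_pos hx k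
    have hN' : (0 : ℝ) < N := by exact_mod_cast hN
    have : (0 : ℝ) < z := by rw [← hz]; positivity
    have : (1 : ℝ) ≤ z := by exact_mod_cast (by exact_mod_cast this : (0 : ℤ) < z)
    rw [div_le_iff₀ hN']; linarith
  have := ge_of_tendsto (G.f_tendsto hx) (Eventually.of_forall h1)
  have hN' : (0 : ℝ) < 1 / N := by positivity
  linarith

end Geo

lemma be_int (n : ℕ → ℕ) (k : ℕ) : (∀ i, ∃ z : ℤ, be n k i = z) ∧ (∀ i, ∃ z : ℤ, be n (k + 1) i = z) ∧
    (∀ i, ∃ z : ℤ, ga n k i = z) := by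
  induction k with
  | zero =>
    refine ⟨?_, ?_, ?_⟩ <;> intro i <;> fin_cases i <;>
      first | (refine ⟨0, ?_⟩; simp [be, ga, bg]; done) | (refine ⟨1, ?_⟩; simp [be, ga, bg]; done)
  | succ k ih =>
    obtain ⟨h0, h1, h2⟩ := ih
    have hg : ∀ i, ∃ z : ℤ, ga n (k + 1) i = z := by
      intro i
      obtain ⟨a, ha⟩ := h2 i
      obtain ⟨b, hb⟩ := h0 i
      exact ⟨a + n k * b, by rw [ga_succ]; simp [ha, hb]⟩
    refine ⟨h1, fun i => ?_, hg⟩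
    obtain ⟨a, ha⟩ := hg i
    obtain ⟨b, hb⟩ := h0 i
    exact ⟨b + a, by rw [show k + 1 + 1 = k + 2 from rfl, be_succ_succ]; simp [ha, hb]⟩

lemma rat_of_int {x : Fin 3 → ℝ} (h : ∀ i, ∃ z : ℤ, x i = z) : IsRat ((sm x)⁻¹ • x) := by
  choose z hz using h
  intro i
  refine ⟨((z 0 + z 1 + z 2 : ℤ) : ℚ)⁻¹ * z i, ?_⟩
  simp [sm, hz]

lemma bh_rat (n : ℕ → ℕ) (k : ℕ) : IsRat (bh n k) := rat_of_int (be_int n k).1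

lemma comb3 {C : Set (Fin 3 → ℝ)} (hC : Convex ℝ C) {u v w x : Fin 3 → ℝ} (hu : u ∈ C) (hv : v ∈ C)
    (hw : w ∈ C) (su : sm u = 1) (sv : sm v = 1) (sw : sm w = 1) (sx : sm x = 1) {a b c : ℝ}
    (ha : 0 ≤ a) (hb : 0 ≤ b) (hc : 0 ≤ c) (h : x = a • u + b • v + c • w) : x ∈ C := by
  have hs : a + b + c = 1 := by
    rw [h, sm_add, sm_add, sm_smul, sm_smul, sm_smul, su, sv, sw] at sx
    linarith
  rw [h]
  have := hC.sum_mem (t := Finset.univ) (w := ![a, b, c]) (z := ![u, v, w])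
    (by intro i _; fin_cases i <;> simpa) (by simp [Fin.sum_univ_three, hs])
    (by intro i _; fin_cases i <;> simpa)
  simpa [Fin.sum_univ_three] using this

lemma comb3be (n : ℕ → ℕ) {C : Set (Fin 3 → ℝ)} (hC : Convex ℝ C) {i j l : ℕ} {x : Fin 3 → ℝ}
    (hu : bh n i ∈ C) (hv : bh n j ∈ C)
    (hw : bh n l ∈ C) (sx : sm x = 1) {a b c : ℝ}
    (ha : 0 ≤ a) (hb : 0 ≤ b) (hc : 0 ≤ c) (h : x = a • be n i + b • be n j + c • be n l) : x ∈ C := by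
  have h1 := sm_be_pos n i
  have h2 := sm_be_pos n j
  have h3 := sm_be_pos n l
  refine comb3 hC hu hv hw (sm_bh _ _) (sm_bh _ _) (sm_bh _ _) sx
    (a := a * sm (be n i)) (b := b * sm (be n j)) (c := c * sm (be n l))
    (by positivity) (by positivity) (by positivity) ?_
  rw [h, mul_smul, mul_smul, mul_smul, ← be_eq_bh, ← be_eq_bh, ← be_eq_bh]

lemma cone_c (n : ℕ → ℕ) {C : Set (Fin 3 → ℝ)} (hC : Convex ℝ C) {x : Fin 3 → ℝ} (sx : sm x = 1) {k : ℕ}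
    (hx2 : 0 ≤ x 2) (hH : ∀ j, j ≤ k + 1 → 0 ≤ st n j x 0) (hk : st n k x 2 ≤ 0)
    (hb : ∀ j, j ≤ k + 1 → bh n j ∈ C) : x ∈ C := by
  classical
  have hex : ∃ j, st n j x 2 ≤ 0 := ⟨k, hk⟩
  have hj := Nat.find_spec hex
  have hjk : Nat.find hex ≤ k := Nat.find_min' hex hk
  rcases hm : Nat.find hex with _ | m
  · rw [hm] at hj
    have h0 : st n 0 x 2 = 0 := le_antisymm hj hx2
    have hd := decomp n 0 x
    rw [h0] at hd
    refine comb3be n hC (hb 0 (by omega)) (hb 1 (by omega)) (hb 1 (by omega)) sx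
      (hH 0 (by omega)) (hH 1 (by omega)) le_rfl ?_
    simpa using hd
  · rw [hm] at hj hjk
    have hmin : 0 < st n m x 2 := by
      have := Nat.find_min hex (m := m) (by omega)
      push Not at this
      exact this
    have hd := decomp n m x
    have hg : ga n m = be n (m + 2) - ((n m : ℝ) + 1) • be n m := by
      rw [be_succ_succ, ga_succ]; module
    rw [stf, stH] at hj
    refine comb3be n hC (hb m (by omega)) (hb (m + 1) (by omega)) (hb (m + 2) (by omega)) sx
      (a := st n m x 0 - (n m + 1) * st n m x 2) (by linarith) (hH (m + 1) (by omega)) hmin.le ?_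
    conv_lhs => rw [hd, hg]
    module

namespace Geo
variable {n : ℕ → ℕ} {Λ : Set (Fin 3 → ℝ)}

lemma ext_not_LF (G : Geo n Λ) {u : Fin 3 → ℝ} (hE : u ∈ Set.extremePoints ℝ Λ) (hu : u ∉ LF n Λ) :
    ∃ j, u = bh n j := by
  have hu' : ∃ k, st n k u 2 < 0 := by
    by_contra h
    push Not at h
    exact hu ⟨hE.1, h⟩
  obtain ⟨k, hk⟩ := hu'
  have hmem : u ∈ convexHull ℝ (Set.range (bh n)) :=
    cone_c n (convex_convexHull ℝ _) (G.hs u hE.1) (G.hf u hE.1) (fun j _ => G.hH u hE.1 j) hk.le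
      (fun j _ => subset_convexHull ℝ _ ⟨j, rfl⟩)
  have hsub : convexHull ℝ (Set.range (bh n)) ⊆ Λ :=
    convexHull_min (by rintro _ ⟨j, rfl⟩; exact G.hb j) G.hconv
  have := extremePoints_convexHull_subset
    (inter_extremePoints_subset_extremePoints_of_subset hsub ⟨hmem, hE⟩)
  obtain ⟨j, hj⟩ := this
  exact ⟨j, hj.symm⟩

lemma bh_ext (G : Geo n Λ) {j : ℕ} (hj : 1 ≤ n j) : bh n (j + 1) ∈ Set.extremePoints ℝ Λ := by
  rw [mem_extremePoints_iff_left]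
  refine ⟨G.hb _, fun y hy z hz hx => ?_⟩
  obtain ⟨a, b, ha, hb, hab, e⟩ := hx
  have hzero : ∀ k, st n k (bh n (j + 1)) 0 = 0 → st n k y 0 = 0 := by
    intro k h
    rw [← e, st_comb] at h
    simp only [Pi.add_apply, Pi.smul_apply, smul_eq_mul] at h
    have h1 := G.hH y hy k
    have h2 := G.hH z hz k
    have h3 : a * st n k y 0 = 0 := by nlinarith [mul_nonneg ha.le h1, mul_nonneg hb.le h2]
    rcases mul_eq_zero.1 h3 with h | h
    · linarith
    · exact h
  have h0 : st n j y 0 = 0 := hzero j (by rw [st_bh']; simp)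
  have h2 : st n (j + 2) y 0 = 0 := hzero (j + 2) (by rw [stH, st_bh']; simp)
  rw [stH, h0] at h2
  have hf : st n j y 2 = 0 := by
    have : (n j : ℝ) ≠ 0 := by exact_mod_cast (by omega : n j ≠ 0)
    have h3 : (n j : ℝ) * st n j y 2 = 0 := by linarith
    exact (mul_eq_zero.1 h3).resolve_left this
  have hd := decomp n j y
  rw [h0, hf] at hd
  simp only [zero_smul, zero_add, add_zero] at hd
  have hs := G.hs y hy
  rw [hd, sm_smul] at hs
  rw [hd, bh, eq_inv_of_mul_eq_one_left hs]

lemma bh_not_ext (G : Geo n Λ) {k : ℕ} (hk : n (k + 1) = 0) : bh n (k + 2) ∉ Set.extremePoints ℝ Λ := by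
  intro hE
  have e : be n (k + 4) + be n k = (2 + (n (k + 2) : ℝ)) • be n (k + 2) := by
    have h1 : be n (k + 4) = be n (k + 2) + ga n (k + 3) := be_succ_succ n (k + 2)
    have h2 : ga n (k + 3) = ga n (k + 2) + (n (k + 2) : ℝ) • be n (k + 2) := ga_succ n (k + 2)
    have h3 : ga n (k + 2) = ga n (k + 1) + (n (k + 1) : ℝ) • be n (k + 1) := ga_succ n (k + 1)
    have h4 := be_succ_succ n k
    rw [h1, h2, h3, hk, add_smul, h4]
    simp only [Nat.cast_zero, zero_smul]
    module
  have p0 := sm_be_pos n k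
  have p2 := sm_be_pos n (k + 2)
  have p4 := sm_be_pos n (k + 4)
  have es := congrArg sm e
  rw [sm_add, sm_smul] at es
  set S := (2 + (n (k + 2) : ℝ)) * sm (be n (k + 2)) with hS
  have hSp : 0 < S := by linarith
  have hseg : bh n (k + 2) ∈ openSegment ℝ (bh n (k + 4)) (bh n k) := by
    refine ⟨sm (be n (k + 4)) / S, sm (be n k) / S, by positivity, by positivity, ?_, ?_⟩
    · rw [← add_div, es, div_self hSp.ne']
    · rw [div_eq_inv_mul, div_eq_inv_mul, mul_smul, mul_smul, ← be_eq_bh, ← be_eq_bh, ← smul_add, e,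
        smul_smul, bh, hS]
      congr 1
      have : (2 + (n (k + 2) : ℝ)) ≠ 0 := by positivity
      field_simp
  have := (mem_extremePoints.1 hE).2 _ (G.hb _) _ (G.hb _) hseg
  have := G.bh_inj this.1
  omega

end Geo

namespace Geo
variable {n : ℕ → ℕ} {Λ : Set (Fin 3 → ℝ)}

lemma poly (G : Geo n Λ) (i j l : ℕ) (p q r : (Fin 3 → ℝ) → ℝ) (hp : Continuous p)
    (hp0 : 0 < p (bh n i)) (hq : ∀ x ∈ Λ, 0 ≤ q x) (hr : ∀ x ∈ Λ, 0 ≤ r x)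
    (h : ∀ x, x = p x • be n i + q x • be n j + r x • be n l) : IsPolygonalVertex Λ (bh n i) := by
  refine ⟨{x | 0 < p x}, (isOpen_lt continuous_const hp).mem_nhds hp0, bh n j, G.hb j, bh n l, G.hb l, ?_⟩
  ext x
  constructor
  · rintro ⟨hx, hxp⟩
    refine ⟨?_, hxp⟩
    refine comb3be n (convex_convexHull ℝ _) (i := i) (j := j) (l := l) ?_ ?_ ?_ (G.hs x hx) (le_of_lt hxp)
      (hq x hx) (hr x hx) (h x)
    all_goals apply subset_convexHull; simp
  · rintro ⟨hx, hxp⟩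
    refine ⟨?_, hxp⟩
    refine convexHull_min ?_ G.hconv hx
    rintro y (rfl | rfl | rfl) <;> exact G.hb _

lemma poly0 (G : Geo n Λ) : IsPolygonalVertex Λ (bh n 0) := by
  refine G.poly 0 1 2 (fun x => st n 0 x 0 - (n 0 + 1) * st n 0 x 2) (fun x => st n 1 x 0)
    (fun x => st n 0 x 2) ?_ ?_ (fun x hx => G.hH x hx 1) (fun x hx => G.hf x hx) ?_
  · exact (st_cont_i n 0 0).sub (continuous_const.mul (st_cont_i n 0 2))
  · simp only [st_bh]
    have := sm_be_pos n 0
    simp; linarith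
  · intro x
    have hg : ga n 0 = be n 2 - ((n 0 : ℝ) + 1) • be n 0 := by
      rw [be_succ_succ, ga_succ]; module
    conv_lhs => rw [decomp n 0 x, hg]
    module

lemma poly1 (G : Geo n Λ) : IsPolygonalVertex Λ (bh n 1) := by
  refine G.poly 1 0 3 (fun x => st n 0 x 1 - (n 1 + 1) * st n 0 x 2) (fun x => st n 2 x 0)
    (fun x => st n 0 x 2) ?_ ?_ (fun x hx => G.hH x hx 2) (fun x hx => G.hf x hx) ?_
  · exact (st_cont_i n 0 1).sub (continuous_const.mul (st_cont_i n 0 2))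
  · simp only [st_bh' n 0]
    have := sm_be_pos n 1
    simp; linarith
  · intro x
    have h1 : be n 3 = be n 1 + ga n 2 := be_succ_succ n 1
    have h2 : ga n 2 = ga n 1 + (n 1 : ℝ) • be n 1 := ga_succ n 1
    have h3 : ga n 1 = ga n 0 + (n 0 : ℝ) • be n 0 := ga_succ n 0
    have h4 := stH n 0 x
    rw [h1, h2, h3, h4, st1]
    conv_lhs => rw [decomp n 0 x]
    module

lemma poly2 (G : Geo n Λ) {k : ℕ} (hk : 1 ≤ n (k + 1)) : IsPolygonalVertex Λ (bh n (k + 2)) := by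
  have hn0 : (0 : ℝ) < n (k + 1) := by exact_mod_cast hk
  refine G.poly (k + 2) k (k + 4)
    (fun x => st n (k + 1) x 1 - st n (k + 3) x 0 / n (k + 1) - (1 + n (k + 2)) * (st n (k + 1) x 0 / n (k + 1)))
    (fun x => st n (k + 3) x 0 / n (k + 1))
    (fun x => st n (k + 1) x 0 / n (k + 1)) ?_ ?_ (fun x hx => div_nonneg (G.hH x hx _) hn0.le)
    (fun x hx => div_nonneg (G.hH x hx _) hn0.le) ?_
  · exact ((st_cont_i n _ 1).sub ((st_cont_i n _ 0).div_const _)).sub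
      (continuous_const.mul ((st_cont_i n _ 0).div_const _))
  · simp only [stH n (k + 1), st_bh' n (k + 1)]
    have := sm_be_pos n (k + 2)
    simp; linarith
  · intro x
    have h1 : be n (k + 4) = be n (k + 2) + ga n (k + 3) := be_succ_succ n (k + 2)
    have h2 : ga n (k + 3) = ga n (k + 2) + (n (k + 2) : ℝ) • be n (k + 2) := ga_succ n (k + 2)
    have h3 : ga n (k + 2) = ga n (k + 1) + (n (k + 1) : ℝ) • be n (k + 1) := ga_succ n (k + 1)
    have h5 : be n k = be n (k + 2) - ga n (k + 1) := by rw [be_succ_succ]; module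
    have h4 := stH n (k + 1) x
    set R := st n (k + 1) x 0 / n (k + 1) with hR
    have e1 : st n (k + 1) x 0 = R * n (k + 1) := by rw [hR]; field_simp
    have e2 : st n (k + 3) x 0 / n (k + 1) = R - st n (k + 1) x 2 := by
      rw [h4, e1]; field_simp
    rw [e2, h1, h2, h3, h5, st1]
    conv_lhs => rw [decomp n (k + 1) x, e1]
    module

lemma poly_all (G : Geo n Λ) {j : ℕ} (hE : bh n j ∈ Set.extremePoints ℝ Λ) :
    IsPolygonalVertex Λ (bh n j) := by
  rcases j with _ | _ | k
  · exact G.poly0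
  · exact G.poly1
  · refine G.poly2 (Nat.one_le_iff_ne_zero.2 fun h => G.bh_not_ext h hE)

lemma acc_sub (G : Geo n Λ) {ve vo v : Fin 3 → ℝ}
    (he : Tendsto (fun i => bh n (2 * i + 2)) atTop (𝓝 ve))
    (ho : Tendsto (fun i => bh n (2 * i + 3)) atTop (𝓝 vo)) (hve : ve ∈ LF n Λ) (hvo : vo ∈ LF n Λ)
    (hv : AccPt v (𝓟 (Set.extremePoints ℝ Λ))) : v = ve ∨ v = vo := by
  by_contra hne
  push Not at hne
  obtain ⟨h1, h2⟩ := hne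
  have hL := G.LF_sub_segment he ho
  obtain ⟨V, hV, We, hWe, hd1⟩ := Filter.disjoint_iff.1 (disjoint_nhds_nhds.2 h1)
  obtain ⟨V', hV', Wo, hWo, hd2⟩ := Filter.disjoint_iff.1 (disjoint_nhds_nhds.2 h2)
  obtain ⟨K, hK⟩ := bh_ev (n := n) he ho (U := We ∪ Wo) (mem_of_superset hWe Set.subset_union_left)
    (mem_of_superset hWo Set.subset_union_right)
  have hfin : ((V ∩ V') ∩ Set.extremePoints ℝ Λ).Finite := by
    refine ((Set.finite_Iio K).image (bh n)).subset ?_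
    rintro x ⟨⟨hx1, hx2⟩, hxE⟩
    have hnW : x ∉ We ∪ Wo := by
      rintro (h | h)
      · exact Set.disjoint_left.1 hd1 hx1 h
      · exact Set.disjoint_left.1 hd2 hx2 h
    by_cases hxL : x ∈ LF n Λ
    · rcases ext_LF hve hvo hL hxL hxE with rfl | rfl
      · exact absurd (Or.inl (mem_of_mem_nhds hWe)) hnW
      · exact absurd (Or.inr (mem_of_mem_nhds hWo)) hnW
    · obtain ⟨j, rfl⟩ := G.ext_not_LF hxE hxL
      refine ⟨j, ?_, rfl⟩
      by_contra hj
      simp only [Set.mem_Iio, not_lt] at hj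
      exact hnW (hK j hj)
  have hacc : AccPt v (𝓟 ((V ∩ V') ∩ Set.extremePoints ℝ Λ)) := by
    rw [accPt_iff_nhds] at hv ⊢
    intro U hU
    obtain ⟨y, hy, hyv⟩ := hv (U ∩ (V ∩ V')) (inter_mem hU (inter_mem hV hV'))
    exact ⟨y, ⟨hy.1.1, hy.1.2, hy.2⟩, hyv⟩
  exact Set.Infinite.of_accPt hacc hfin

lemma acc_of (G : Geo n Λ) {v : Fin 3 → ℝ} {g : ℕ → ℕ}
    (he : Tendsto (fun i => bh n (g i + 1)) atTop (𝓝 v)) (hv : v ∈ LF n Λ)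
    (hinf : ∀ K, ∃ i, K ≤ i ∧ 1 ≤ n (g i)) : AccPt v (𝓟 (Set.extremePoints ℝ Λ)) := by
  rw [accPt_iff_nhds]
  intro U hU
  obtain ⟨K, hK⟩ := (he.eventually hU).exists_forall_of_atTop
  obtain ⟨i, hi, h1⟩ := hinf K
  refine ⟨bh n (g i + 1), ⟨hK i hi, G.bh_ext h1⟩, fun h => bh_not_mem n Λ (g i + 1) (by rwa [h])⟩

lemma sm_cont : Continuous sm := by unfold sm; fun_prop

lemma eq_lim (G : Geo n Λ) {ve vo : Fin 3 → ℝ} {g : ℕ → ℕ}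
    (he : Tendsto (fun i => bh n (g i)) atTop (𝓝 ve))
    (ho : Tendsto (fun i => bh n (g i + 1)) atTop (𝓝 vo)) (hg : ∀ i, g (i + 1) = g i + 2)
    (hK : ∃ K, ∀ i, K ≤ i → n (g i + 1) = 0) : ve = vo := by
  obtain ⟨K, hK⟩ := hK
  have hgi : ∀ i, g i = g 0 + 2 * i := by
    intro i
    induction i with
    | zero => rfl
    | succ i ih => rw [hg, ih]; ring
  have hD : ∀ i, K ≤ i → be n (g i + 1) - be n (g i) = be n (g K + 1) - be n (g K) := by
    intro i hi
    induction i, hi using Nat.le_induction with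
    | base => rfl
    | succ i hi ih =>
      rw [← ih, hg, show g i + 2 + 1 = (g i + 1) + 2 by ring, be_succ_succ, be_succ_succ, ga_succ n (g i + 1),
        hK i hi]
      simp
  set D := be n (g K + 1) - be n (g K) with hDD
  set d := sm D
  have hbh : ∀ i, K ≤ i → sm (be n (g i + 1)) • (bh n (g i + 1)) = sm (be n (g i)) • bh n (g i) + D := by
    intro i hi
    rw [← be_eq_bh, ← be_eq_bh, ← hD i hi]; module
  have hsm : ∀ i, K ≤ i → sm (be n (g i)) = sm (be n (g i + 1)) - d := by
    intro i hi
    have := congrArg sm (hbh i hi)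
    rw [sm_add, sm_smul, sm_smul, sm_bh, sm_bh] at this
    linarith
  have hinv : Tendsto (fun i => (sm (be n (g i + 1)))⁻¹) atTop (𝓝 0) := by
    apply Tendsto.inv_tendsto_atTop
    refine tendsto_atTop_mono (fun i => ?_) tendsto_natCast_atTop_atTop
    have := sm_be_ge n (g 0 + 1) i
    rw [hgi i, show g 0 + 2 * i + 1 = g 0 + 1 + 2 * i by ring]
    exact this
  have hlim : Tendsto (fun i => bh n (g i) + (sm (be n (g i + 1)))⁻¹ • (D - d • bh n (g i))) atTop
      (𝓝 (ve + (0 : ℝ) • (D - d • ve))) :=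
    he.add (hinv.smul (tendsto_const_nhds.sub (he.const_smul d)))
  have heq : (fun i => bh n (g i) + (sm (be n (g i + 1)))⁻¹ • (D - d • bh n (g i))) =ᶠ[atTop]
      (fun i => bh n (g i + 1)) := by
    filter_upwards [eventually_ge_atTop K] with i hi
    have h1 := hbh i hi
    rw [hsm i hi] at h1
    have hp := sm_be_pos n (g i + 1)
    have hD' : D = sm (be n (g i + 1)) • bh n (g i + 1) - (sm (be n (g i + 1)) - d) • bh n (g i) := by
      rw [h1]; module
    rw [show D - d • bh n (g i) = sm (be n (g i + 1)) • (bh n (g i + 1) - bh n (g i)) by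
      rw [hD']; module, smul_smul, inv_mul_cancel₀ (by linarith)]
    module
  have := tendsto_nhds_unique (hlim.congr' heq) ho
  simpa using this

end Geo

namespace Geo
variable {n : ℕ → ℕ} {Λ : Set (Fin 3 → ℝ)}

lemma frontier_mem (G : Geo n Λ) {x : Fin 3 → ℝ} (hx : x ∈ LF n Λ) : x ∈ intrinsicFrontier ℝ Λ := by
  rw [← intrinsicClosure_sdiff_intrinsicInterior]
  refine ⟨subset_intrinsicClosure hx.1, fun hi => ?_⟩
  obtain ⟨y, hy, hyx⟩ := mem_intrinsicInterior.1 hi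
  let S := affineSpan ℝ Λ
  have h0 : bh n 0 ∈ S := subset_affineSpan ℝ Λ (G.hb 0)
  have hxS : x ∈ S := subset_affineSpan ℝ Λ hx.1
  let f : ℝ → S := fun t => ⟨AffineMap.lineMap (bh n 0) x t, AffineMap.lineMap_mem t h0 hxS⟩
  have hf : Continuous f := by
    refine Continuous.subtype_mk ?_ _
    exact AffineMap.lineMap_continuous
  have hf1 : f 1 = y := by
    apply Subtype.ext
    simp [f, hyx]
  have hev : ∀ᶠ t in 𝓝 (1 : ℝ), (f t : Fin 3 → ℝ) ∈ Λ := by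
    have : ((↑) ⁻¹' Λ : Set S) ∈ 𝓝 (f 1) := by
      rw [hf1]; exact mem_interior_iff_mem_nhds.1 hy
    exact hf.continuousAt.eventually this
  have hev2 : ∀ᶠ t in 𝓝[>] (1 : ℝ), (f t : Fin 3 → ℝ) ∈ Λ := hev.filter_mono nhdsWithin_le_nhds
  obtain ⟨t, ht, ht1⟩ := (hev2.and self_mem_nhdsWithin).exists
  replace ht1 : 1 < t := ht1
  have hseg : x ∈ openSegment ℝ (bh n 0) (f t : Fin 3 → ℝ) := by
    have htp : 0 < t := by linarith
    refine ⟨1 - 1 / t, 1 / t, ?_, by positivity, by ring, ?_⟩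
    · rw [sub_pos, div_lt_one htp]; exact ht1
    · simp only [f, AffineMap.lineMap_apply_module]
      rw [smul_add, smul_smul, smul_smul, one_div_mul_cancel htp.ne', one_smul, ← add_assoc, ← add_smul]
      have : 1 - 1 / t + 1 / t * (1 - t) = 0 := by field_simp; ring
      rw [this]; simp
  exact bh_not_mem n Λ 0 (G.face (G.hb 0) ht hx hseg).1

/-- the geometric conclusion -/
theorem main (G : Geo n Λ) : ∀ E : Set (Fin 3 → ℝ), E = Set.extremePoints ℝ Λ →
      (E.Infinite ∧ ∃ v, AccPt v (Filter.principal E) ∧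
        (∀ v', AccPt v' (Filter.principal E) → v' = v) ∧
        v ∈ E ∧ ¬ IsRat v ∧
        ∀ u ∈ E \ {v}, IsRat u ∧ IsPolygonalVertex Λ u)
        ∨
      (E.Infinite ∧ ∃ v₁ v₂, v₁ ≠ v₂ ∧
        AccPt v₁ (Filter.principal E) ∧ AccPt v₂ (Filter.principal E) ∧
        (∀ v', AccPt v' (Filter.principal E) → v' = v₁ ∨ v' = v₂) ∧
        v₁ ∈ E ∧ v₂ ∈ E ∧ ¬ IsRat v₁ ∧ ¬ IsRat v₂ ∧
        (∀ u ∈ E \ {v₁, v₂}, IsRat u ∧ IsPolygonalVertex Λ u) ∧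
        segment ℝ v₁ v₂ ⊆ intrinsicFrontier ℝ Λ) := by
  rintro E rfl
  obtain ⟨ve, hve, he⟩ := G.exists_even
  obtain ⟨vo, hvo, ho⟩ := G.exists_odd
  have hL := G.LF_sub_segment he ho
  have hEe := G.ext_left hve hL
  have hEo := G.ext_left hvo (by rwa [segment_symm] at hL)
  have hacc := fun v => G.acc_sub (v := v) he ho hve hvo
  have hre := G.not_rat hve
  have hro := G.not_rat hvo
  have hoth : ∀ u ∈ Set.extremePoints ℝ Λ \ {ve, vo}, IsRat u ∧ IsPolygonalVertex Λ u := by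
    rintro u ⟨hu, hne⟩
    have : u ∉ LF n Λ := fun h => hne (by simpa using ext_LF hve hvo hL h hu)
    obtain ⟨j, rfl⟩ := G.ext_not_LF hu this
    exact ⟨bh_rat n j, G.poly_all hu⟩
  have hE1 : (∀ K, ∃ i, K ≤ i ∧ 1 ≤ n (2 * i + 1)) → AccPt ve (𝓟 (Set.extremePoints ℝ Λ)) :=
    fun h => G.acc_of (g := fun i => 2 * i + 1) he hve h
  have hO1 : (∀ K, ∃ i, K ≤ i ∧ 1 ≤ n (2 * i + 2)) → AccPt vo (𝓟 (Set.extremePoints ℝ Λ)) :=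
    fun h => G.acc_of (g := fun i => 2 * i + 2) ho hvo h
  have hsplit : (∀ K, ∃ i, K ≤ i ∧ 1 ≤ n (2 * i + 1)) ∨ (∀ K, ∃ i, K ≤ i ∧ 1 ≤ n (2 * i + 2)) := by
    by_contra h
    push Not at h
    obtain ⟨⟨K1, h1⟩, K2, h2⟩ := h
    obtain ⟨k, hk, hk1⟩ := G.hn (2 * K1 + 2 * K2 + 2)
    rcases Nat.even_or_odd' k with ⟨c, hc | hc⟩
    · have := h2 (c - 1) (by omega)
      rw [show 2 * (c - 1) + 2 = k by omega] at this
      omega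
    · have := h1 c (by omega)
      rw [← hc] at this
      omega
  by_cases heq : ve = vo
  · left
    have hA : AccPt ve (𝓟 (Set.extremePoints ℝ Λ)) := by
      rcases hsplit with h | h
      · exact hE1 h
      · rw [heq]; exact hO1 h
    refine ⟨Set.Infinite.of_accPt hA, ve, hA, fun v hv => ?_, hEe, hre, fun u hu => hoth u ?_⟩
    · rcases hacc v hv with h | h
      · exact h
      · rw [h, heq]
    · rw [← heq]; simpa using hu
  · right
    have hAe : AccPt ve (𝓟 (Set.extremePoints ℝ Λ)) := by
      apply hE1
      by_contra h
      push Not at h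
      obtain ⟨K, hK⟩ := h
      refine heq ?_
      refine (G.eq_lim (g := fun i => 2 * i + 2) (vo := vo) he ho (fun i => by ring)
        ⟨K, fun i hi => ?_⟩)
      have := hK (i + 1) (by omega)
      show n (2 * i + 2 + 1) = 0
      rw [show 2 * i + 2 + 1 = 2 * (i + 1) + 1 by ring]
      omega
    have hAo : AccPt vo (𝓟 (Set.extremePoints ℝ Λ)) := by
      apply hO1
      by_contra h
      push Not at h
      obtain ⟨K, hK⟩ := h
      refine heq ?_
      have he' := (tendsto_add_atTop_iff_nat 1).2 he
      refine (G.eq_lim (g := fun i => 2 * i + 3) (vo := ve) ho he' (fun i => by ring)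
        ⟨K, fun i hi => ?_⟩).symm
      have := hK (i + 1) (by omega)
      show n (2 * i + 3 + 1) = 0
      rw [show 2 * i + 3 + 1 = 2 * (i + 1) + 2 by ring]
      omega
    exact ⟨Set.Infinite.of_accPt hAe, ve, vo, heq, hAe, hAo, hacc, hEe, hEo, hre, hro, hoth,
      fun x hx => G.frontier_mem (G.LF_convex.segment_subset hve hvo hx)⟩

end Geo

lemma fin_term (n : ℕ → ℕ) {Λ : Set (Fin 3 → ℝ)} (hconv : Convex ℝ Λ) (hs : ∀ x ∈ Λ, sm x = 1) (k : ℕ)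
    (hH : ∀ x ∈ Λ, ∀ j, j ≤ k + 1 → 0 ≤ st n j x 0) (hf : ∀ x ∈ Λ, 0 ≤ x 2)
    (hk : ∀ x ∈ Λ, st n k x 2 ≤ 0) (hb : ∀ j, j ≤ k + 1 → bh n j ∈ Λ) :
    ∃ F : Finset (Fin 3 → ℝ), (∀ v ∈ F, IsRat v) ∧ Λ = convexHull ℝ (F : Set (Fin 3 → ℝ)) := by
  classical
  refine ⟨(Finset.range (k + 2)).image (bh n), ?_, ?_⟩
  · intro v hv
    obtain ⟨j, _, rfl⟩ := Finset.mem_image.1 hv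
    exact bh_rat n j
  · apply Set.Subset.antisymm
    · intro x hx
      refine cone_c n (convex_convexHull ℝ _) (hs x hx) (hf x hx) (hH x hx) (hk x hx) fun j hj => ?_
      apply subset_convexHull
      simp only [Finset.coe_image, Finset.coe_range]
      exact ⟨j, by simp; omega, rfl⟩
    · refine convexHull_min ?_ hconv
      intro x hx
      simp only [Finset.coe_image, Finset.coe_range] at hx
      obtain ⟨j, hj, rfl⟩ := hx
      simp at hj
      exact hb j (by omega)

lemma fin_zero (n : ℕ → ℕ) {Λ : Set (Fin 3 → ℝ)} (hc : IsCompact Λ)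
    (hconv : Convex ℝ Λ) (hs : ∀ x ∈ Λ, sm x = 1) (K : ℕ)
    (hH : ∀ x ∈ Λ, ∀ j, 0 ≤ st n j x 0) (hf : ∀ x ∈ Λ, 0 ≤ x 2)
    (hK : ∀ k, K ≤ k → n k = 0) (hb : ∀ j, bh n j ∈ Λ) :
    ∃ F : Finset (Fin 3 → ℝ), (∀ v ∈ F, IsRat v) ∧ Λ = convexHull ℝ (F : Set (Fin 3 → ℝ)) := by
  classical
  set g := (sm (ga n K))⁻¹ • ga n K with hg
  have hga1 := sm_ga n K
  have hga : ga n K = sm (ga n K) • g := by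
    rw [hg, smul_smul, mul_inv_cancel₀ (by linarith), one_smul]
  have hsg : sm g = 1 := by
    rw [hg, sm_smul]; exact inv_mul_cancel₀ (by linarith)
  have hgac : ∀ k, K ≤ k → ga n k = ga n K := by
    intro k hk
    induction k, hk using Nat.le_induction with
    | base => rfl
    | succ k hk ih => rw [ga_succ, hK k hk, ih]; simp
  have hbe : ∀ i : ℕ, be n (K + 2 * i) = be n K + (i : ℝ) • ga n K := by
    intro i
    induction i with
    | zero => simp
    | succ i ih =>
      rw [show K + 2 * (i + 1) = K + 2 * i + 2 by ring, be_succ_succ, ih, hgac (K + 2 * i + 1) (by omega)]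
      push_cast; module
  have hgΛ : g ∈ Λ := by
    have hinv : Tendsto (fun i : ℕ => (sm (be n (K + 2 * i)))⁻¹) atTop (𝓝 0) := by
      apply Tendsto.inv_tendsto_atTop
      exact tendsto_atTop_mono (fun i => sm_be_ge n K i) tendsto_natCast_atTop_atTop
    have hlim : Tendsto (fun i : ℕ => g + (sm (be n (K + 2 * i)))⁻¹ • (be n K - sm (be n K) • g))
        atTop (𝓝 (g + (0 : ℝ) • (be n K - sm (be n K) • g))) :=
      tendsto_const_nhds.add (hinv.smul_const _)
    rw [zero_smul, add_zero] at hlim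
    refine hc.isClosed.mem_of_tendsto hlim (Eventually.of_forall fun i => ?_)
    convert hb (K + 2 * i) using 1
    have hp := sm_be_pos n (K + 2 * i)
    have h1 : be n K - sm (be n K) • g = be n (K + 2 * i) - sm (be n (K + 2 * i)) • g := by
      rw [hbe i, sm_add, sm_smul, add_smul, mul_smul, ← hga]; module
    rw [h1, smul_sub, smul_smul, inv_mul_cancel₀ (by linarith), bh]; module
  refine ⟨insert g ((Finset.range (K + 2)).image (bh n)), ?_, ?_⟩
  · intro v hv
    rcases Finset.mem_insert.1 hv with rfl | hv
    · exact rat_of_int (be_int n K).2.2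
    obtain ⟨j, _, rfl⟩ := Finset.mem_image.1 hv
    exact bh_rat n j
  · have hmem : ∀ j, j ≤ K + 1 → bh n j ∈ convexHull ℝ
        ((insert g ((Finset.range (K + 2)).image (bh n)) : Finset (Fin 3 → ℝ)) : Set (Fin 3 → ℝ)) := by
      intro j hj
      apply subset_convexHull
      simp only [Finset.coe_image, Finset.coe_range, Finset.coe_insert]
      exact Or.inr ⟨j, by simp; omega, rfl⟩
    apply Set.Subset.antisymm
    · intro x hx
      rcases le_total (st n K x 2) 0 with h | h
      · exact cone_c n (convex_convexHull ℝ _) (hs x hx) (hf x hx) (fun j _ => hH x hx j) h hmem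
      · have hd := decomp n K x
        have p0 := sm_be_pos n K
        have p1 := sm_be_pos n (K + 1)
        have q0 := hH x hx K
        have q1 := hH x hx (K + 1)
        refine comb3 (convex_convexHull ℝ _) (hmem K (by omega)) (hmem (K + 1) (by omega)) (w := g) ?_
          (sm_bh _ _) (sm_bh _ _) hsg (hs x hx)
          (a := st n K x 0 * sm (be n K)) (b := st n (K + 1) x 0 * sm (be n (K + 1)))
          (c := st n K x 2 * sm (ga n K)) (by positivity) (by positivity) (by positivity) ?_
        · apply subset_convexHull; simp
        · rw [mul_smul, mul_smul, mul_smul, ← be_eq_bh, ← be_eq_bh, ← hga]; exact hd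
    · refine convexHull_min ?_ hconv
      intro x hx
      simp only [Finset.coe_image, Finset.coe_range, Finset.coe_insert] at hx
      rcases hx with rfl | ⟨j, hj, rfl⟩
      · exact hgΛ
      · exact hb j

abbrev W3 := List (Fin 3)

structure QP (Q : W3 → Prop) : Prop where
  q1 : ∀ u v, Q u → Q (u ++ v)
  q2 : ∀ p u v (a b : Fin 3), b < a → Q (p ++ a :: u) → Q (p ++ b :: v)
  q30 : Q [0]
  q31 : Q [1]
  q4 : ¬ Q [2]

def Free (Q : W3 → Prop) : W3 → Prop
  | [] => True
  | a :: u => Q (a :: u) ∧ Free Q u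

noncomputable def cnt : W3 → Fin 3 → ℝ
  | [] => 0
  | a :: u => Pi.single a 1 + cnt u

lemma cnt_append (u v : W3) : cnt (u ++ v) = cnt u + cnt v := by
  induction u with
  | nil => simp [cnt]
  | cons a u ih => simp [cnt, ih, add_assoc]

lemma cnt_nonneg (u : W3) (i : Fin 3) : 0 ≤ cnt u i := by
  induction u with
  | nil => simp [cnt]
  | cons a u ih =>
    simp only [cnt, Pi.add_apply, Pi.single_apply]
    split_ifs <;> linarith

lemma sm_cnt (u : W3) : sm (cnt u) = u.length := by
  induction u with
  | nil => simp [cnt, sm]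
  | cons a u ih =>
    rw [cnt, sm_add, ih]
    have : sm (Pi.single a 1) = 1 := by fin_cases a <;> simp [sm]
    rw [this]; push_cast [List.length_cons]; ring

lemma free_append {Q : W3 → Prop} (h : QP Q) {u v : W3} (hu : Free Q u) (hv : Free Q v) :
    Free Q (u ++ v) := by
  induction u with
  | nil => exact hv
  | cons a u ih => exact ⟨h.q1 _ v hu.1, ih hu.2⟩

lemma free_right {Q : W3 → Prop} {u v : W3} (hu : Free Q (u ++ v)) : Free Q v := by
  induction u with
  | nil => exact hu
  | cons a u ih => exact ih hu.2

lemma q_cons0 {Q : W3 → Prop} (h : QP Q) (u : W3) : Q (0 :: u) := h.q1 [0] u h.q30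
lemma q_cons1 {Q : W3 → Prop} (h : QP Q) (u : W3) : Q (1 :: u) := h.q1 [1] u h.q31

lemma free_rep {Q : W3 → Prop} (h : QP Q) (m : ℕ) {u : W3} (hu : Free Q u) :
    Free Q (List.replicate m 0 ++ u) := by
  induction m with
  | zero => simpa
  | succ m ih => exact ⟨q_cons0 h _, ih⟩

def blk (n : ℕ) : Fin 3 → W3
  | 0 => [1]
  | 1 => 2 :: List.replicate (n + 1) 0
  | 2 => 2 :: List.replicate n 0

def lam (n : ℕ) : W3 → W3
  | [] => []
  | a :: t => blk n a ++ lam n t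

lemma lam_append (n : ℕ) (s t : W3) : lam n (s ++ t) = lam n s ++ lam n t := by
  induction s with
  | nil => rfl
  | cons a s ih => simp [lam, ih]

lemma cases3 (a : Fin 3) : a = 0 ∨ a = 1 ∨ a = 2 := by fin_cases a <;> simp

/-- admissible exponent -/
structure Adm (Q : W3 → Prop) (n : ℕ) : Prop where
  pos : Q (2 :: List.replicate (n + 1) 0)
  neg : ∀ m, m ≤ n → ¬ Q (2 :: List.replicate m 0)

lemma rep_succ' (n : ℕ) (v : W3) : List.replicate (n + 1) (0 : Fin 3) ++ v =
    List.replicate n 0 ++ 0 :: v := by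
  rw [List.replicate_succ']; simp

lemma der_QP {Q : W3 → Prop} (h : QP Q) {n : ℕ} (hn : Adm Q n) : QP (fun t => Q (lam n t)) where
  q1 u v hu := by
    rw [lam_append]; exact h.q1 _ _ hu
  q2 p u v a b hab hu := by
    rw [lam_append] at hu ⊢
    rcases cases3 a with rfl | rfl | rfl
    · exact absurd hab (by simp)
    · have hb : b = 0 := by omega
      subst hb
      exact h.q2 (lam n p) _ _ 2 1 (by decide) hu
    · rcases cases3 b with rfl | rfl | rfl
      · exact h.q2 (lam n p) _ _ 2 1 (by decide) hu
      · have e : lam n p ++ lam n (1 :: v) = (lam n p ++ 2 :: List.replicate n 0) ++ 0 :: lam n v := by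
          simp only [lam, blk, List.cons_append, rep_succ']; simp
        have e2 : lam n p ++ lam n (2 :: u) = (lam n p ++ 2 :: List.replicate n 0) ++ lam n u := by
          simp [lam, blk]
        rw [e2] at hu
        rw [e]
        rcases u with _ | ⟨c, u⟩
        · refine h.q1 _ _ ?_
          simpa [lam] using hu
        · rcases cases3 c with rfl | rfl | rfl
          · exact h.q2 _ _ _ 1 0 (by decide) hu
          · exact h.q2 _ _ _ 2 0 (by decide) hu
          · exact h.q2 _ _ _ 2 0 (by decide) hu
      · exact absurd hab (by simp)
  q30 := by simpa [lam, blk] using h.q31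
  q31 := by simpa [lam, blk] using hn.pos
  q4 := by simpa [lam, blk] using hn.neg n le_rfl

lemma lemL {Q : W3 → Prop} (h : QP Q) {n : ℕ} {t : W3} (ht : Free (fun t => Q (lam n t)) t) :
    Free Q (lam n t) := by
  induction t with
  | nil => trivial
  | cons a t ih =>
    have hq := ht.1
    have := ih ht.2
    rcases cases3 a with rfl | rfl | rfl
    · exact ⟨hq, this⟩
    · exact ⟨hq, free_rep h (n + 1) this⟩
    · exact ⟨hq, free_rep h n this⟩

lemma cnt_rep (m : ℕ) : cnt (List.replicate m 0) = ![(m : ℝ), 0, 0] := by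
  induction m with
  | zero => ext i; fin_cases i <;> simp [cnt]
  | succ m ih =>
    rw [List.replicate_succ, cnt, ih]
    ext i; fin_cases i <;> simp [add_comm]

lemma stp_add (n : ℕ) (x y : Fin 3 → ℝ) : stp n (x + y) = stp n x + stp n y := by
  ext i; fin_cases i <;> simp [stp] <;> ring

lemma stp_lam (n : ℕ) (t : W3) : stp n (cnt (lam n t)) = cnt t := by
  induction t with
  | nil => ext i; fin_cases i <;> simp [stp, lam, cnt]
  | cons a t ih =>
    rw [lam, cnt_append, stp_add, ih, cnt]
    congr 1
    rcases cases3 a with rfl | rfl | rfl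
    · ext i; fin_cases i <;> simp [stp, blk, cnt]
    · simp only [blk, cnt, cnt_rep]; ext i; fin_cases i <;> simp [stp]
    · simp only [blk, cnt, cnt_rep]; ext i; fin_cases i <;> simp [stp]

lemma parse1 {Q : W3 → Prop} (h : QP Q) (N : ℕ) (hN : ∀ m, m ≤ N → ¬ Q (2 :: List.replicate m 0))
    {u : W3} (hu : Q (2 :: u)) : ∀ m, m ≤ N + 1 → ∃ v, u = List.replicate m 0 ++ v ∨ m = N + 1 := by
  intro m hm
  induction m with
  | zero => exact ⟨u, Or.inl rfl⟩
  | succ m ih =>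
    obtain ⟨v, hv | hv⟩ := ih (by omega)
    · rcases v with _ | ⟨c, v⟩
      · exact absurd hu (by rw [hv]; simpa using hN m (by omega))
      · by_cases hc : c = 0
        · refine ⟨v, Or.inl ?_⟩
          rw [hv, hc, rep_succ']
        · refine ⟨v, Or.inr ?_⟩
          by_contra hne
          have h0 : (0 : Fin 3) < c := Fin.pos_of_ne_zero hc
          have := h.q2 (2 :: List.replicate m 0) v [] c 0 h0 (by rw [hv] at hu; exact hu)
          refine hN (m + 1) (by omega) ?_
          rw [List.replicate_succ']; exact this
    · omega

lemma parse {Q : W3 → Prop} (h : QP Q) (N : ℕ) (hN : ∀ m, m ≤ N → ¬ Q (2 :: List.replicate m 0))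
    {u : W3} (hu : Q (2 :: u)) : ∃ v, u = List.replicate N 0 ++ v := by
  obtain ⟨v, h | h⟩ := parse1 h N hN hu N (by omega)
  · exact ⟨v, h⟩
  · omega

def bpsi (n : ℕ) : Fin 3 → W3
  | 0 => [0]
  | 1 => [1]
  | 2 => 2 :: List.replicate n 0

def psi (n : ℕ) : W3 → W3
  | [] => []
  | a :: t => bpsi n a ++ psi n t

lemma exists_psi {Q : W3 → Prop} (h : QP Q) {n : ℕ} (hn : Adm Q n) :
    ∀ (l : ℕ) (u : W3), u.length ≤ l → Free Q u → ∃ y, u = psi n y := by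
  intro l
  induction l with
  | zero =>
    intro u hu _
    exact ⟨[], by simpa [psi] using hu⟩
  | succ l ih =>
    intro u hu hf
    rcases u with _ | ⟨a, u⟩
    · exact ⟨[], rfl⟩
    · simp only [List.length_cons] at hu
      rcases cases3 a with rfl | rfl | rfl
      · obtain ⟨y, hy⟩ := ih u (by omega) hf.2
        exact ⟨0 :: y, by rw [hy]; rfl⟩
      · obtain ⟨y, hy⟩ := ih u (by omega) hf.2
        exact ⟨1 :: y, by rw [hy]; rfl⟩
      · obtain ⟨v, hv⟩ := parse h n hn.neg hf.1
        have h2 := hf.2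
        rw [hv] at h2 hu
        obtain ⟨y, hy⟩ := ih v (by simp at hu; omega) (free_right h2)
        exact ⟨2 :: y, by rw [hv, hy]; rfl⟩

def RR : W3 → W3 × ℕ
  | [] => ([], 0)
  | a :: y => if a = 0 then ((RR y).1, (RR y).2 + 1) else if a = 1 then (0 :: (RR y).1, (RR y).2)
      else if (RR y).2 = 0 then (2 :: (RR y).1, 0) else (1 :: (RR y).1, (RR y).2 - 1)

lemma RR0 (y : W3) : RR (0 :: y) = ((RR y).1, (RR y).2 + 1) := by simp [RR]
lemma RR1 (y : W3) : RR (1 :: y) = (0 :: (RR y).1, (RR y).2) := by simp [RR]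
lemma RR2z (y : W3) (h : (RR y).2 = 0) : RR (2 :: y) = (2 :: (RR y).1, 0) := by simp [RR, h]
lemma RR2p (y : W3) (h : (RR y).2 ≠ 0) : RR (2 :: y) = (1 :: (RR y).1, (RR y).2 - 1) := by simp [RR, h]

lemma cnt_psi (n : ℕ) (y : W3) : stp n (cnt (psi n y)) = cnt (RR y).1 + ![0, ((RR y).2 : ℝ), -((RR y).2 : ℝ)] := by
  induction y with
  | nil => ext i; fin_cases i <;> simp [stp, psi, cnt, RR]
  | cons a y ih =>
    rw [psi, cnt_append, stp_add, ih]
    rcases cases3 a with rfl | rfl | rfl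
    · rw [RR0, ← add_assoc, add_comm _ (cnt (RR y).1), add_assoc]
      congr 1
      ext i; fin_cases i <;> simp [stp, bpsi, cnt] <;> ring
    · rw [RR1, ← add_assoc, cnt]
      congr 2
      ext i; fin_cases i <;> simp [stp, bpsi, cnt]
    · by_cases hz : (RR y).2 = 0
      · rw [RR2z y hz, ← add_assoc, cnt, hz]
        congr 2
        simp only [bpsi, cnt, cnt_rep]; ext i; fin_cases i <;> simp [stp]
      · rw [RR2p y hz, cnt]
        have : (((RR y).2 - 1 : ℕ) : ℝ) = (RR y).2 - 1 := by
          rw [Nat.cast_sub (by omega)]; simp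
        simp only [bpsi, cnt, cnt_rep, this]
        ext i
        fin_cases i
        · simp [stp, Matrix.vecHead]
        · simp [stp, Matrix.vecHead, Matrix.vecTail]; ring
        · simp [stp, Matrix.vecHead, Matrix.vecTail]; ring

/-- strictly smaller at a common position -/
def slt (v u : W3) : Prop := ∃ p a b u' v', v = p ++ b :: v' ∧ u = p ++ a :: u' ∧ b < a

lemma slt_pre (p : W3) {v u : W3} (h : v = u ∨ slt v u) : p ++ v = p ++ u ∨ slt (p ++ v) (p ++ u) := by
  rcases h with rfl | ⟨q, a, b, u', v', rfl, rfl, hab⟩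
  · exact Or.inl rfl
  · exact Or.inr ⟨p ++ q, a, b, u', v', by simp, by simp, hab⟩

lemma claimE (n : ℕ) : ∀ (l : ℕ) (y : W3), y.length ≤ l → (RR y).2 = 0 →
    (lam n (RR y).1 = psi n y ∨ slt (lam n (RR y).1) (psi n y)) := by
  intro l
  induction l with
  | zero =>
    intro y hy _
    have : y = [] := by simpa using hy
    subst this
    exact Or.inl rfl
  | succ l ih =>
    intro y hy hz
    rcases y with _ | ⟨a, y⟩
    · exact Or.inl rfl
    simp only [List.length_cons] at hy
    rcases cases3 a with rfl | rfl | rfl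
    · rw [RR0] at hz; simp at hz
    · rw [RR1] at hz ⊢
      exact slt_pre [1] (ih y (by omega) hz)
    · by_cases hz' : (RR y).2 = 0
      · rw [RR2z y hz']
        exact slt_pre (2 :: List.replicate n 0) (ih y (by omega) hz')
      · rw [RR2p y hz'] at hz ⊢
        have hz1 : (RR y).2 = 1 := by simp only at hz; omega
        have e : lam n (1 :: (RR y).1) = (2 :: List.replicate n 0) ++ 0 :: lam n (RR y).1 := by
          simp only [lam, blk, List.cons_append, rep_succ']
        simp only [e]
        refine slt_pre (2 :: List.replicate n 0) ?_
        rcases y with _ | ⟨c, y⟩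
        · simp [RR] at hz1
        · rcases cases3 c with rfl | rfl | rfl
          · rw [RR0] at hz1 ⊢
            simp only [List.length_cons] at hy
            exact slt_pre [0] (ih y (by omega) (by simpa using hz1))
          · exact Or.inr ⟨[], 1, 0, _, _, rfl, rfl, by decide⟩
          · exact Or.inr ⟨[], 2, 0, _, _, rfl, rfl, by decide⟩

lemma free_RR {Q : W3 → Prop} (h : QP Q) {n : ℕ} (hn : Adm Q n) (y : W3) (hy : Free Q (psi n y)) :
    Free (fun t => Q (lam n t)) (RR y).1 := by
  have hd := der_QP h hn
  induction y with
  | nil => trivial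
  | cons a y ih =>
    have hy2 : Free Q (psi n y) := free_right (u := bpsi n a) hy
    have := ih hy2
    rcases cases3 a with rfl | rfl | rfl
    · rw [RR0]; exact this
    · rw [RR1]; exact ⟨q_cons0 hd _, this⟩
    · by_cases hz : (RR y).2 = 0
      · rcases claimE n _ (2 :: y) le_rfl (by rw [RR2z y hz]) with h1 | h1
        · rw [RR2z y hz] at h1 ⊢
          refine ⟨?_, this⟩
          show Q (lam n (2 :: (RR y).1))
          simp only at h1
          rw [h1]; exact hy.1
        · rw [RR2z y hz] at h1 ⊢
          refine ⟨?_, this⟩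
          show Q (lam n (2 :: (RR y).1))
          obtain ⟨p, a, b, u', v', e1, e2, hab⟩ := h1
          simp only at e1
          rw [e1]
          refine h.q2 p u' v' a b hab ?_
          rw [← e2]; exact hy.1
      · rw [RR2p y hz]; exact ⟨q_cons1 hd _, this⟩

lemma lemU {Q : W3 → Prop} (h : QP Q) {n : ℕ} (hn : Adm Q n) {u : W3} (hu : Free Q u) :
    ∃ t, Free (fun t => Q (lam n t)) t ∧ ∃ z : ℕ, stp n (cnt u) = cnt t + ![0, (z : ℝ), -(z : ℝ)] := by
  obtain ⟨y, rfl⟩ := exists_psi h hn _ u le_rfl hu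
  exact ⟨(RR y).1, free_RR h hn y hu, (RR y).2, cnt_psi n y⟩

def NT (Q : W3 → Prop) : Prop := ∃ n, Q (2 :: List.replicate (n + 1) 0)

open Classical in
noncomputable def nn (Q : W3 → Prop) : ℕ := if h : NT Q then Nat.find h else 0

lemma nn_adm {Q : W3 → Prop} (h : QP Q) (hN : NT Q) : Adm Q (nn Q) := by
  classical
  have e : nn Q = Nat.find hN := by simp only [nn, dif_pos hN]
  rw [e]
  refine ⟨Nat.find_spec hN, fun m hm => ?_⟩
  rcases m with _ | m
  · exact h.q4
  · exact Nat.find_min hN (by omega)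

noncomputable def Qc (Q : W3 → Prop) : ℕ → W3 → Prop
  | 0 => Q
  | k + 1 => fun t => Qc Q k (lam (nn (Qc Q k)) t)

noncomputable def nc (Q : W3 → Prop) (k : ℕ) : ℕ := nn (Qc Q k)

lemma Qc_QP {Q : W3 → Prop} (h : QP Q) (k : ℕ) (hk : ∀ j, j < k → NT (Qc Q j)) : QP (Qc Q k) := by
  induction k with
  | zero => exact h
  | succ k ih =>
    have := ih (fun j hj => hk j (by omega))
    exact der_QP this (nn_adm this (hk k (by omega)))

lemma chain_up {Q : W3 → Prop} (h : QP Q) (k : ℕ) (hk : ∀ j, j < k → NT (Qc Q j)) {u : W3}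
    (hu : Free Q u) : ∃ t, Free (Qc Q k) t ∧ ∃ p : Fin 3 → ℝ, st (nc Q) k (cnt u) = cnt t + p ∧
      0 ≤ p 0 ∧ 0 ≤ p 1 ∧ p 2 ≤ 0 := by
  induction k with
  | zero => exact ⟨u, hu, 0, by simp [st], by simp⟩
  | succ k ih =>
    obtain ⟨t, ht, p, e, p0, p1, p2⟩ := ih (fun j hj => hk j (by omega))
    have hQ := Qc_QP h k (fun j hj => hk j (by omega))
    obtain ⟨s, hs, z, hz⟩ := lemU hQ (nn_adm hQ (hk k (by omega))) ht
    refine ⟨s, hs, ![0, (z : ℝ), -(z : ℝ)] + stp (nc Q k) p, ?_, ?_, ?_, ?_⟩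
    · rw [st, e, stp_add, ← add_assoc, ← hz]; rfl
    · simpa [stp] using p1
    · have : (0 : ℝ) ≤ nc Q k := Nat.cast_nonneg _
      have h3 : (0 : ℝ) ≤ z := Nat.cast_nonneg _
      have := mul_nonneg this (neg_nonneg.2 p2)
      simp [stp]; linarith
    · have : (0 : ℝ) ≤ nc Q k := Nat.cast_nonneg _
      have h3 : (0 : ℝ) ≤ z := Nat.cast_nonneg _
      have := mul_nonneg this (neg_nonneg.2 p2)
      simp [stp]; linarith

lemma chain_down {Q : W3 → Prop} (h : QP Q) (k : ℕ) (hk : ∀ j, j < k → NT (Qc Q j)) :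
    ∀ {t : W3}, Free (Qc Q k) t → ∃ u, Free Q u ∧ st (nc Q) k (cnt u) = cnt t := by
  induction k with
  | zero => intro t ht; exact ⟨t, ht, rfl⟩
  | succ k ih =>
    intro t ht
    have hQ := Qc_QP h k (fun j hj => hk j (by omega))
    obtain ⟨u, hu, e⟩ := ih (fun j hj => hk j (by omega)) (lemL hQ ht)
    refine ⟨u, hu, ?_⟩
    rw [st, e]; exact stp_lam _ t

lemma chain_H {Q : W3 → Prop} (h : QP Q) (k : ℕ) (hk : ∀ j, j < k → NT (Qc Q j)) {u : W3}
    (hu : Free Q u) : ∀ j, j ≤ k + 1 → 0 ≤ st (nc Q) j (cnt u) 0 := by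
  intro j hj
  rcases Nat.lt_or_ge k j with h1 | h1
  · have : j = k + 1 := by omega
    subst this
    obtain ⟨t, ht, p, e, p0, p1, p2⟩ := chain_up h k hk hu
    rw [← st1, e]
    have := cnt_nonneg t 1
    simp only [Pi.add_apply]; linarith
  · obtain ⟨t, ht, p, e, p0, p1, p2⟩ := chain_up h j (fun i hi => hk i (by omega)) hu
    rw [e]
    have := cnt_nonneg t 0
    simp only [Pi.add_apply]; linarith

lemma chain_be {Q : W3 → Prop} (h : QP Q) (k : ℕ) (hk : ∀ j, j < k → NT (Qc Q j)) :
    ∀ j, j ≤ k + 1 → ∃ u, Free Q u ∧ cnt u = be (nc Q) j := by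
  intro j hj
  rcases Nat.lt_or_ge k j with h1 | h1
  · have : j = k + 1 := by omega
    subst this
    obtain ⟨u, hu, e⟩ := chain_down h k hk (t := [1]) ⟨(Qc_QP h k hk).q31, trivial⟩
    refine ⟨u, hu, ?_⟩
    rw [decomp (nc Q) k (cnt u), ← st1, e]
    simp [cnt]
  · obtain ⟨u, hu, e⟩ := chain_down h j (fun i hi => hk i (by omega)) (t := [0])
      ⟨(Qc_QP h j (fun i hi => hk i (by omega))).q30, trivial⟩
    refine ⟨u, hu, ?_⟩
    rw [decomp (nc Q) j (cnt u), ← st1, e]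
    simp [cnt]

lemma no_two {Q : W3 → Prop} (h : QP Q) (hN : ¬ NT Q) {u : W3} (hu : Free Q u) : cnt u 2 = 0 := by
  induction u with
  | nil => simp [cnt]
  | cons a u ih =>
    have h2 := ih hu.2
    rcases cases3 a with rfl | rfl | rfl
    · simp [cnt, h2]
    · simp [cnt, h2]
    · exfalso
      obtain ⟨v, hv⟩ := parse h (u.length + 1) (fun m _ => by
        rcases m with _ | m
        · exact h.q4
        · exact fun hq => hN ⟨m, hq⟩) hu.1
      have := congrArg List.length hv
      simp at this
      omega

lemma chain_term {Q : W3 → Prop} (h : QP Q) (k : ℕ) (hk : ∀ j, j < k → NT (Qc Q j))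
    (hN : ¬ NT (Qc Q k)) {u : W3}
    (hu : Free Q u) : st (nc Q) k (cnt u) 2 ≤ 0 := by
  obtain ⟨t, ht, p, e, p0, p1, p2⟩ := chain_up h k hk hu
  rw [e]
  have := no_two (Qc_QP h k hk) hN ht
  simp only [Pi.add_apply]; linarith

/-- normalized count -/
noncomputable def fq (u : W3) : Fin 3 → ℝ := (u.length : ℝ)⁻¹ • cnt u

def SS (Q : W3 → Prop) : Set (Fin 3 → ℝ) := {x | ∃ u, Free Q u ∧ u ≠ [] ∧ fq u = x}

theorem combi {Q : W3 → Prop} (h : QP Q) {Λ : Set (Fin 3 → ℝ)} (hΛ : Λ = closure (SS Q))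
    (hconv : Convex ℝ Λ) :
    (∃ F : Finset (Fin 3 → ℝ), (∀ v ∈ F, IsRat v) ∧ Λ = convexHull ℝ (F : Set (Fin 3 → ℝ))) ∨
    ∃ n, Geo n Λ := by
  have hcl : IsClosed Λ := by rw [hΛ]; exact isClosed_closure
  have hind : ∀ T : Set (Fin 3 → ℝ), IsClosed T → (∀ u, Free Q u → u ≠ [] → fq u ∈ T) → ∀ x ∈ Λ, x ∈ T := by
    intro T hT h x hx
    rw [hΛ] at hx
    refine closure_minimal ?_ hT hx
    rintro _ ⟨u, hu, hne, rfl⟩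
    exact h u hu hne
  have hlen : ∀ u : W3, u ≠ [] → (0 : ℝ) < u.length := by
    intro u hu
    exact_mod_cast List.length_pos_iff.2 hu
  have hs : ∀ x ∈ Λ, sm x = 1 := by
    refine hind {x | sm x = 1} (isClosed_eq Geo.sm_cont continuous_const) fun u hu hne => ?_
    have := hlen u hne
    show sm (fq u) = 1
    rw [fq, sm_smul, sm_cnt, inv_mul_cancel₀ this.ne']
  have hpos : ∀ i, ∀ x ∈ Λ, 0 ≤ x i := by
    intro i
    refine hind {x | 0 ≤ x i} (isClosed_le continuous_const (continuous_apply i)) fun u hu hne => ?_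
    have := hlen u hne
    have h2 := cnt_nonneg u i
    show 0 ≤ fq u i
    simp only [fq, Pi.smul_apply, smul_eq_mul]
    positivity
  have hcomp : IsCompact Λ := by
    refine Metric.isCompact_of_isClosed_isBounded hcl ?_
    refine (Metric.isBounded_Icc (0 : Fin 3 → ℝ) 1).subset fun x hx => ⟨fun i => hpos i x hx, fun i => ?_⟩
    have h1 := hs x hx
    have a0 := hpos 0 x hx
    have a1 := hpos 1 x hx
    have a2 := hpos 2 x hx
    unfold sm at h1
    rcases cases3 i with rfl | rfl | rfl <;> simp <;> linarith
  have hst : ∀ (j : ℕ) (u : W3) (i : Fin 3), st (nc Q) j (fq u) i = (u.length : ℝ)⁻¹ * st (nc Q) j (cnt u) i := by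
    intro j u i
    rw [fq, st_smul]; rfl
  have hH : ∀ k, (∀ j, j < k → NT (Qc Q j)) → ∀ x ∈ Λ, ∀ j, j ≤ k + 1 → 0 ≤ st (nc Q) j x 0 := by
    intro k hk x hx j hj
    refine hind {x | 0 ≤ st (nc Q) j x 0} (isClosed_le continuous_const (st_cont_i _ _ _)) (fun u hu hne => ?_) x hx
    have := hlen u hne
    have h2 := chain_H h k hk hu j hj
    show 0 ≤ st (nc Q) j (fq u) 0
    rw [hst]; positivity
  have hbe : ∀ k, (∀ j, j < k → NT (Qc Q j)) → ∀ j, j ≤ k + 1 → bh (nc Q) j ∈ Λ := by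
    intro k hk j hj
    obtain ⟨u, hu, e⟩ := chain_be h k hk j hj
    rw [hΛ]
    refine subset_closure ⟨u, hu, ?_, ?_⟩
    · rintro rfl
      have h1 := sm_be_pos (nc Q) j
      rw [← e, sm_cnt] at h1
      norm_num at h1
    · rw [fq, bh, ← e, sm_cnt]
  by_cases hT : ∀ k, NT (Qc Q k)
  · by_cases hn : ∀ K, ∃ k, K ≤ k ∧ 1 ≤ nc Q k
    · right
      exact ⟨nc Q, hn, hcomp, hconv, hs, fun x hx k => hH k (fun j _ => hT j) x hx k (by omega),
        hpos 2, fun k => hbe k (fun j _ => hT j) k (by omega)⟩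
    · left
      push Not at hn
      obtain ⟨K, hK⟩ := hn
      exact fin_zero (nc Q) hcomp hconv hs K (fun x hx k => hH k (fun j _ => hT j) x hx k (by omega))
        (hpos 2) (fun k hk => by have := hK k hk; omega) (fun k => hbe k (fun j _ => hT j) k (by omega))
  · left
    classical
    push Not at hT
    have hfind : ∀ j, j < Nat.find hT → NT (Qc Q j) := fun j hj => by
      have := Nat.find_min hT hj
      push Not at this
      exact this
    have hspec := Nat.find_spec hT
    refine fin_term (nc Q) hconv hs (Nat.find hT) (hH _ hfind) (hpos 2) ?_ (hbe _ hfind)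
    refine hind {x | st (nc Q) (Nat.find hT) x 2 ≤ 0} (isClosed_le (st_cont_i _ _ _) continuous_const)
      fun u hu hne => ?_
    have := hlen u hne
    have h2 := chain_term h _ hfind hspec hu
    show st (nc Q) _ (fq u) 2 ≤ 0
    rw [hst]
    exact mul_nonpos_of_nonneg_of_nonpos (by positivity) h2

def QW : W3 → Seq3 → Prop
  | [], _ => False
  | a :: u, w => a < w 0 ∨ (a = w 0 ∧ QW u (shift w))

lemma QW_q1 : ∀ (u v : W3) (w : Seq3), QW u w → QW (u ++ v) w
  | [], _, _, h => h.elim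
  | a :: u, v, w, h => by
    rcases h with h | ⟨h, h2⟩
    · exact Or.inl h
    · exact Or.inr ⟨h, QW_q1 u v _ h2⟩

lemma QW_q2 : ∀ (p u v : W3) (a b : Fin 3) (w : Seq3), b < a → QW (p ++ a :: u) w → QW (p ++ b :: v) w
  | [], u, v, a, b, w, hab, h => by
    rcases h with h | ⟨h, h2⟩
    · exact Or.inl (hab.trans h)
    · exact Or.inl (h ▸ hab)
  | c :: p, u, v, a, b, w, hab, h => by
    rcases h with h | ⟨h, h2⟩
    · exact Or.inl h
    · exact Or.inr ⟨h, QW_q2 p u v a b _ hab h2⟩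

lemma QW_QP {w : Seq3} (hw : w 0 = 2) : QP (fun u => QW u w) where
  q1 u v h := QW_q1 u v w h
  q2 p u v a b hab h := QW_q2 p u v a b w hab h
  q30 := Or.inl (by rw [hw]; decide)
  q31 := Or.inl (by rw [hw]; decide)
  q4 := by
    rintro (h | ⟨_, h⟩)
    · rw [hw] at h; exact lt_irrefl _ h
    · exact h

def pre : Seq3 → ℕ → W3
  | _, 0 => []
  | s, r + 1 => s 0 :: pre (shift s) r

lemma pre_length (s : Seq3) (r : ℕ) : (pre s r).length = r := by
  induction r generalizing s with
  | zero => rfl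
  | succ r ih => simp [pre, ih]

lemma birk_succ (s : Seq3) (r : ℕ) : birk s (r + 1) = kappa s + birk (shift s) r := by
  unfold birk
  rw [Finset.sum_range_succ', add_comm]
  rfl

lemma kappa_eq (s : Seq3) : kappa s = Pi.single (s 0) 1 := by
  ext i; simp [kappa, Pi.single_apply]

lemma cnt_pre (s : Seq3) (r : ℕ) : cnt (pre s r) = birk s r := by
  induction r generalizing s with
  | zero => simp [pre, cnt, birk]
  | succ r ih => rw [birk_succ, pre, cnt, ih, kappa_eq]

lemma lexLe_pre (r : ℕ) : ∀ (s w : Seq3), lexLe s w → QW (pre s r) w ∨ pre s r = pre w r := by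
  induction r with
  | zero => intro s w _; exact Or.inr rfl
  | succ r ih =>
    rintro s w (rfl | ⟨m, hm, hlt⟩)
    · exact Or.inr rfl
    · rcases m with _ | m
      · exact Or.inl (Or.inl hlt)
      · have h0 := hm 0 (by omega)
        rcases ih (shift s) (shift w) (Or.inr ⟨m, fun i hi => hm (i + 1) (by omega), hlt⟩) with h | h
        · exact Or.inl (Or.inr ⟨h0, h⟩)
        · exact Or.inr (by simp only [pre, h0, h])

lemma pre_lexLe (r : ℕ) : ∀ (s w : Seq3), QW (pre s r) w → lexLe s w := by
  induction r with
  | zero => intro s w h; exact h.elim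
  | succ r ih =>
    rintro s w (h | ⟨h, h2⟩)
    · exact Or.inr ⟨0, by simp, h⟩
    · rcases ih _ _ h2 with h3 | ⟨m, hm, hlt⟩
      · left
        funext i
        rcases i with _ | i
        · exact h
        · exact congrFun h3 i
      · refine Or.inr ⟨m + 1, fun i hi => ?_, hlt⟩
        rcases i with _ | i
        · exact h
        · exact hm i (by omega)

lemma slt_pre_QW (r : ℕ) : ∀ (x : W3) (w : Seq3), slt x (pre w r) → QW x w := by
  induction r with
  | zero =>
    rintro x w ⟨p, a, b, u', v', _, h, _⟩
    exact absurd h (by simp [pre])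
  | succ r ih =>
    rintro x w ⟨p, a, b, u', v', rfl, h, hab⟩
    rcases p with _ | ⟨c, p⟩
    · simp only [pre, List.nil_append, List.cons.injEq] at h
      exact Or.inl (h.1 ▸ hab)
    · simp only [pre, List.cons_append, List.cons.injEq] at h
      exact Or.inr ⟨h.1.symm, ih _ _ ⟨p, a, b, u', v', rfl, h.2, hab⟩⟩

open Classical in
/-- decrement the last nonzero letter -/
noncomputable def dec : W3 → W3
  | [] => []
  | a :: u => (if ∀ x ∈ u, x = 0 then a - (if a = 0 then 0 else 1) else a) :: dec u

lemma pred_lt (a : Fin 3) (h : a ≠ 0) : a - 1 < a := by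
  fin_cases a
  · exact absurd rfl h
  · decide
  · decide

lemma dec_zero (u : W3) (h : ∀ x ∈ u, x = 0) : dec u = u := by
  induction u with
  | nil => rfl
  | cons a u ih =>
    have h1 : ∀ x ∈ u, x = 0 := fun x hx => h x (List.mem_cons_of_mem _ hx)
    have h2 : a = 0 := h a List.mem_cons_self
    rw [dec, if_pos h1, ih h1, if_pos h2, sub_zero]

lemma dec_slt (u : W3) (h : ¬ ∀ x ∈ u, x = 0) : slt (dec u) u := by
  induction u with
  | nil => simp at h
  | cons a u ih =>
    by_cases h1 : ∀ x ∈ u, x = 0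
    · have h2 : a ≠ 0 := fun h2 => h (by
        intro x hx
        rcases List.mem_cons.1 hx with rfl | hx
        · exact h2
        · exact h1 x hx)
      rw [dec, if_pos h1, if_neg h2]
      exact ⟨[], a, a - 1, u, _, rfl, rfl, pred_lt a h2⟩
    · obtain ⟨p, c, b, u', v', e1, e2, hab⟩ := ih h1
      rw [dec, if_neg h1]
      exact ⟨a :: p, c, b, u', v', by rw [e1]; rfl, by rw [e2]; rfl, hab⟩

lemma dec_length (u : W3) : (dec u).length = u.length := by
  induction u with
  | nil => rfl
  | cons a u ih => simp [dec, ih]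

lemma dec_cnt (u : W3) (i : Fin 3) : |cnt (dec u) i - cnt u i| ≤ 1 := by
  induction u with
  | nil => simp [dec]
  | cons a u ih =>
    by_cases h1 : ∀ x ∈ u, x = 0
    · simp only [dec, cnt, dec_zero u h1, Pi.add_apply, Pi.single_apply, add_sub_add_right_eq_sub]
      split_ifs <;> norm_num
    · rw [dec, if_neg h1]
      simpa [cnt] using ih

lemma shift_iter_mem {s w : Seq3} (hs : s ∈ BetaShift w) : shift s ∈ BetaShift w := fun r => by
  have := hs (r + 1)
  rwa [Function.iterate_succ_apply] at this

lemma dec_free {w : Seq3} (hw : w 0 = 2) (r : ℕ) : ∀ s ∈ BetaShift w, Free (fun u => QW u w) (dec (pre s r)) := by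
  induction r with
  | zero => intro s _; trivial
  | succ r ih =>
    intro s hs
    refine ⟨?_, ih _ (shift_iter_mem hs)⟩
    show QW (dec (pre s (r + 1))) w
    by_cases hz : ∀ x ∈ pre s (r + 1), x = 0
    · rw [dec_zero _ hz]
      have h0 : s 0 = 0 := hz _ List.mem_cons_self
      refine Or.inl ?_
      rw [h0, hw]; decide
    · have h1 := dec_slt _ hz
      rcases lexLe_pre (r + 1) s w (hs 0) with h | h
      · obtain ⟨p, a, b, u', v', e1, e2, hab⟩ := h1
        rw [e1]
        refine QW_q2 p u' v' a b w hab ?_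
        rw [← e2]; exact h
      · rw [h] at h1 ⊢
        exact slt_pre_QW _ _ _ h1

lemma DF_sub {w : Seq3} (hw : w 0 = 2) : DF w ⊆ closure (SS (fun u => QW u w)) := by
  rintro v ⟨s, hs, hv⟩
  have hlim : Tendsto (fun r : ℕ => fq (dec (pre s r))) atTop (𝓝 v) := by
    have h0 : Tendsto (fun r : ℕ => fq (dec (pre s r)) - (r : ℝ)⁻¹ • birk s r) atTop (𝓝 0) := by
      rw [tendsto_zero_iff_norm_tendsto_zero]
      refine squeeze_zero (fun _ => norm_nonneg _) (fun r => ?_) (tendsto_inv_atTop_nhds_zero_nat (𝕜 := ℝ))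
      rw [fq, dec_length, pre_length, ← cnt_pre, ← smul_sub, norm_smul, norm_inv, Real.norm_natCast]
      have : ‖cnt (dec (pre s r)) - cnt (pre s r)‖ ≤ 1 :=
        (pi_norm_le_iff_of_nonneg zero_le_one).2 fun i => dec_cnt _ i
      exact mul_le_of_le_one_right (by positivity) this
    have := h0.add hv
    simpa using this
  refine mem_closure_of_tendsto hlim ?_
  filter_upwards [eventually_ge_atTop 1] with r hr
  refine ⟨dec (pre s r), dec_free hw r s hs, ?_, rfl⟩
  intro h
  have := congrArg List.length h
  rw [dec_length, pre_length] at this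
  simp at this
  omega

def wpow (u : W3) : ℕ → W3
  | 0 => []
  | m + 1 => u ++ wpow u m

lemma wpow_cnt (u : W3) (m : ℕ) : cnt (wpow u m) = (m : ℝ) • cnt u := by
  induction m with
  | zero => simp [wpow, cnt]
  | succ m ih => rw [wpow, cnt_append, ih]; push_cast; module

lemma wpow_length (u : W3) (m : ℕ) : (wpow u m).length = m * u.length := by
  induction m with
  | zero => simp [wpow]
  | succ m ih => simp [wpow, ih]; ring

lemma wpow_free {Q : W3 → Prop} (h : QP Q) {u : W3} (hu : Free Q u) (m : ℕ) : Free Q (wpow u m) := by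
  induction m with
  | zero => trivial
  | succ m ih => exact free_append h hu ih

lemma SS_convex {Q : W3 → Prop} (h : QP Q) : Convex ℝ (closure (SS Q)) := by
  have key : ∀ x ∈ SS Q, ∀ y ∈ SS Q, ∀ a b : ℝ, 0 ≤ a → 0 ≤ b → a + b = 1 →
      a • x + b • y ∈ closure (SS Q) := by
    rintro _ ⟨u, hu, hune, rfl⟩ _ ⟨v, hv, hvne, rfl⟩ a b ha hb hab
    have lu : (0 : ℝ) < u.length := by exact_mod_cast List.length_pos_iff.2 hune
    have lv : (0 : ℝ) < v.length := by exact_mod_cast List.length_pos_iff.2 hvne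
    have ht : Tendsto (fun q : ℝ => (⌊a * q⌋₊ : ℝ) / q) atTop (𝓝 a) :=
      tendsto_nat_floor_mul_div_atTop ha
    have ht2 : Tendsto (fun q : ℕ => (⌊a * q⌋₊ : ℝ) / (q : ℝ)) atTop (𝓝 a) :=
      ht.comp tendsto_natCast_atTop_atTop
    have hlim : Tendsto (fun q : ℕ => ((⌊a * q⌋₊ : ℝ) / (q : ℝ)) • fq u +
        (1 - (⌊a * q⌋₊ : ℝ) / (q : ℝ)) • fq v) atTop (𝓝 (a • fq u + (1 - a) • fq v)) :=
      (ht2.smul_const _).add ((tendsto_const_nhds.sub ht2).smul_const _)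
    rw [show 1 - a = b by linarith] at hlim
    refine mem_closure_of_tendsto hlim ?_
    filter_upwards [eventually_ge_atTop 1] with q hq
    set p := ⌊a * (q : ℝ)⌋₊ with hp
    have hq0 : (0 : ℝ) < q := by exact_mod_cast hq
    have hpq : p ≤ q := by
      have h1 : (p : ℝ) ≤ a * q := Nat.floor_le (by positivity)
      have : (p : ℝ) ≤ q := by nlinarith
      exact_mod_cast this
    have hlen : (((wpow u (p * v.length) ++ wpow v ((q - p) * u.length)).length : ℕ) : ℝ) =
        q * u.length * v.length := by
      rw [List.length_append, wpow_length, wpow_length]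
      push_cast [Nat.cast_sub hpq]; ring
    refine ⟨wpow u (p * v.length) ++ wpow v ((q - p) * u.length),
      free_append h (wpow_free h hu _) (wpow_free h hv _), ?_, ?_⟩
    · intro hnil
      rw [hnil] at hlen
      have : 0 < (q : ℝ) * u.length * v.length := by positivity
      simp only [List.length_nil, Nat.cast_zero] at hlen
      linarith
    · rw [fq, hlen, cnt_append, wpow_cnt, wpow_cnt, fq, fq, smul_add, smul_smul, smul_smul, smul_smul, smul_smul]
      push_cast [Nat.cast_sub hpq]
      congr 2
      · field_simp
      · field_simp
  intro x hx y hy a b ha hb hab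
  have hf : Continuous (fun z : (Fin 3 → ℝ) × (Fin 3 → ℝ) => a • z.1 + b • z.2) := by fun_prop
  have := map_mem_closure₂ (f := fun x y : Fin 3 → ℝ => a • x + b • y) hf hx hy
    (fun x hx y hy => key x hx y hy a b ha hb hab)
  rwa [closure_closure] at this

lemma slow (L : ℕ → ℕ) : ∃ m : ℕ → ℕ, Tendsto m atTop atTop ∧
    ∀ ε : ℝ, 0 < ε → ∃ J, ∀ j, J ≤ j → (L (m j) : ℝ) ≤ ε * j := by
  classical
  let P : ℕ → ℕ → Prop := fun j m => (m + 1) * L m ≤ j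
  let m : ℕ → ℕ := fun j => Nat.findGreatest (P j) j
  have hm : Tendsto m atTop atTop := by
    refine tendsto_atTop.2 fun M => ?_
    filter_upwards [eventually_ge_atTop (M + (M + 1) * L M)] with j hj
    exact Nat.le_findGreatest (by omega) (show (M + 1) * L M ≤ j by omega)
  refine ⟨m, hm, fun ε hε => ?_⟩
  obtain ⟨N, hN⟩ := exists_nat_gt (1 / ε)
  obtain ⟨J, hJ⟩ := (tendsto_atTop.1 hm N).exists_forall_of_atTop
  refine ⟨J + L 0, fun j hj => ?_⟩
  have h1 : (m j + 1) * L (m j) ≤ j :=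
    Nat.findGreatest_spec (P := P j) (m := 0) (by omega) (show (0 + 1) * L 0 ≤ j by omega)
  have h2 := hJ j (by omega)
  have h3 : ((m j : ℝ) + 1) * L (m j) ≤ j := by exact_mod_cast h1
  have h4 : (N : ℝ) ≤ m j := by exact_mod_cast h2
  have h5 : 1 ≤ ε * (m j + 1) := by
    rw [div_lt_iff₀ hε] at hN
    nlinarith
  have h6 : (0 : ℝ) ≤ L (m j) := Nat.cast_nonneg _
  nlinarith

/-- concatenation of the first `j` blocks -/
def pref (g : ℕ → W3) : ℕ → W3
  | 0 => []
  | j + 1 => pref g j ++ g j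

def lims (g : ℕ → W3) : Seq3 := fun i => (pref g (i + 1)).getD i 0

lemma pref_mono (g : ℕ → W3) {j k : ℕ} (h : j ≤ k) : pref g j <+: pref g k := by
  induction k, h using Nat.le_induction with
  | base => exact List.prefix_rfl
  | succ k hk ih => exact ih.trans (List.prefix_append _ _)

lemma pref_length_ge (g : ℕ → W3) (hg : ∀ i, g i ≠ []) (j : ℕ) : j ≤ (pref g j).length := by
  induction j with
  | zero => simp
  | succ j ih =>
    have := List.length_pos_iff.2 (hg j)
    rw [pref, List.length_append]; omega

lemma pref_get (g : ℕ → W3) (hg : ∀ i, g i ≠ []) (j i : ℕ) (hi : i < (pref g j).length) :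
    (pref g j)[i] = lims g i := by
  have h1 := pref_length_ge g hg (i + 1)
  have e : lims g i = (pref g (i + 1))[i] := by
    unfold lims
    rw [List.getD_eq_getElem _ _ (by omega)]
  rw [e]
  rcases le_total j (i + 1) with h | h
  · exact (pref_mono g h).getElem hi
  · exact ((pref_mono g h).getElem (by omega)).symm

lemma shift_iter (r : ℕ) (s : Seq3) (i : ℕ) : (shift^[r] s) i = s (r + i) := by
  induction r generalizing s with
  | zero => simp
  | succ r ih =>
    rw [Function.iterate_succ_apply, ih]
    show s (r + i + 1) = _
    congr 1; omega

lemma pre_get (r : ℕ) : ∀ (s : Seq3) (i : ℕ) (hi : i < (pre s r).length), (pre s r)[i] = s i := by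
  induction r with
  | zero => intro s i hi; simp [pre] at hi
  | succ r ih =>
    intro s i hi
    rcases i with _ | i
    · rfl
    · simp only [pre, List.getElem_cons_succ]
      rw [ih]; rfl

lemma pre_drop (g : ℕ → W3) (hg : ∀ i, g i ≠ []) (j r : ℕ) :
    pre (shift^[r] (lims g)) ((pref g j).length - r) = (pref g j).drop r := by
  refine List.ext_getElem (by simp [pre_length]) fun i h1 h2 => ?_
  rw [pre_get, shift_iter, List.getElem_drop, pref_get g hg]

lemma pre_take (g : ℕ → W3) (hg : ∀ i, g i ≠ []) (j r : ℕ) (h : r ≤ (pref g j).length) :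
    pre (lims g) r = (pref g j).take r := by
  refine List.ext_getElem (by simp [pre_length, h]) fun i h1 h2 => ?_
  rw [pre_get, List.getElem_take, pref_get g hg]

lemma pref_free {Q : W3 → Prop} (h : QP Q) {g : ℕ → W3} (hg : ∀ i, Free Q (g i)) (j : ℕ) :
    Free Q (pref g j) := by
  induction j with
  | zero => trivial
  | succ j ih => exact free_append h ih (hg j)

lemma free_self {Q : W3 → Prop} {u : W3} (h : Free Q u) (hu : u ≠ []) : Q u := by
  rcases u with _ | ⟨a, u⟩
  · exact absurd rfl hu
  · exact h.1

lemma lims_mem {w : Seq3} (hw : w 0 = 2) {g : ℕ → W3} (hg : ∀ i, g i ≠ [])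
    (hf : ∀ i, Free (fun u => QW u w) (g i)) : lims g ∈ BetaShift w := by
  intro r
  have h1 := pref_length_ge g hg (r + 1)
  refine pre_lexLe ((pref g (r + 1)).length - r) _ _ ?_
  rw [pre_drop g hg]
  have h2 := pref_free (QW_QP hw) hf (r + 1)
  rw [← List.take_append_drop r (pref g (r + 1))] at h2
  refine free_self (Q := fun u => QW u w) (free_right h2) ?_
  intro h
  have := congrArg List.length h
  simp at this
  omega

noncomputable def dv (x : Fin 3 → ℝ) (u : W3) : Fin 3 → ℝ := cnt u - (u.length : ℝ) • x

lemma dv_append (x : Fin 3 → ℝ) (u v : W3) : dv x (u ++ v) = dv x u + dv x v := by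
  unfold dv; rw [cnt_append, List.length_append]; push_cast; module

lemma cnt_norm (u : W3) : ‖cnt u‖ ≤ u.length := by
  rw [pi_norm_le_iff_of_nonneg (Nat.cast_nonneg _)]
  intro i
  rw [Real.norm_of_nonneg (cnt_nonneg u i), ← sm_cnt]
  have a0 := cnt_nonneg u 0
  have a1 := cnt_nonneg u 1
  have a2 := cnt_nonneg u 2
  unfold sm
  rcases cases3 i with rfl | rfl | rfl <;> linarith

lemma dv_norm (x : Fin 3 → ℝ) (u : W3) : ‖dv x u‖ ≤ (1 + ‖x‖) * u.length := by
  unfold dv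
  refine (norm_sub_le _ _).trans ?_
  rw [norm_smul, Real.norm_natCast]
  linarith [cnt_norm u]

lemma sub_DF {w : Seq3} (hw : w 0 = 2) : closure (SS (fun u => QW u w)) ⊆ DF w := by
  intro x hx
  obtain ⟨y, hy, hyx⟩ := mem_closure_iff_seq_limit.1 hx
  choose u hu hne hfq using hy
  obtain ⟨m, hm, hslow⟩ := slow (fun i => (u i).length)
  let g : ℕ → W3 := fun j => u (m j)
  have hg : ∀ i, g i ≠ [] := fun i => hne _
  have hgf : ∀ i, Free (fun u => QW u w) (g i) := fun i => hu _
  refine ⟨lims g, lims_mem hw hg hgf, ?_⟩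
  have hlen : ∀ j, ((pref g j).length : ℝ) = ∑ i ∈ Finset.range j, ((g i).length : ℝ) := by
    intro j
    induction j with
    | zero => simp [pref]
    | succ j ih => rw [Finset.sum_range_succ, ← ih, pref, List.length_append]; push_cast; rfl
  have hdv : ∀ j, dv x (pref g j) = ∑ i ∈ Finset.range j, dv x (g i) := by
    intro j
    induction j with
    | zero => simp [pref, dv, cnt]
    | succ j ih => rw [Finset.sum_range_succ, ← ih, pref, dv_append]
  have hlo : (fun i => dv x (g i)) =o[atTop] (fun i => ((g i).length : ℝ)) := by
    have h1 : Tendsto (fun i => fq (g i) - x) atTop (𝓝 0) := by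
      have h2 : Tendsto (fun i => fq (g i)) atTop (𝓝 x) := by
        refine (hyx.comp hm).congr fun i => ?_
        simp only [Function.comp, g, hfq]
      simpa using h2.sub_const x
    have h3 : (fun i => fq (g i) - x) =o[atTop] (fun _ => (1 : ℝ)) :=
      (Asymptotics.isLittleO_one_iff ℝ).2 h1
    have h4 := (Asymptotics.isBigO_refl (fun i => ((g i).length : ℝ)) atTop).smul_isLittleO h3
    refine (h4.congr (fun i => ?_) (fun i => by simp))
    have : ((g i).length : ℝ) ≠ 0 := by
      have := List.length_pos_iff.2 (hg i)
      exact_mod_cast this.ne'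
    rw [dv, fq, smul_sub, smul_smul, mul_inv_cancel₀ this, one_smul]
  have hT : Tendsto (fun j => ∑ i ∈ Finset.range j, ((g i).length : ℝ)) atTop atTop := by
    refine tendsto_atTop_mono (fun j => ?_) tendsto_natCast_atTop_atTop
    rw [← hlen]
    exact_mod_cast pref_length_ge g hg j
  have hsum := hlo.sum_range (fun i => Nat.cast_nonneg _) hT
  set C := 1 + ‖x‖ with hC
  have hCp : 0 < C := by positivity
  have hmain : ∀ ε : ℝ, 0 < ε → ∃ R, ∀ r, R ≤ r → ‖dv x (pre (lims g) r)‖ ≤ ε * r := by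
    intro ε hε
    obtain ⟨J1, hJ1⟩ := (hsum.bound (half_pos hε)).exists_forall_of_atTop
    obtain ⟨J2, hJ2⟩ := hslow (ε / 2 / C) (by positivity)
    refine ⟨(pref g (J1 + J2)).length, fun r hr => ?_⟩
    obtain ⟨j, hj, hjr, hrj⟩ : ∃ j, J1 + J2 ≤ j ∧ (pref g j).length ≤ r ∧ r < (pref g (j + 1)).length := by
      classical
      have hex : ∃ k, r < (pref g k).length := ⟨r + 1, by have := pref_length_ge g hg (r + 1); omega⟩
      have h1 := Nat.find_spec hex
      have hk : J1 + J2 < Nat.find hex := by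
        by_contra hcon
        push Not at hcon
        have := (pref_mono g hcon).length_le
        omega
      obtain ⟨j, hj⟩ : ∃ j, Nat.find hex = j + 1 := ⟨Nat.find hex - 1, by omega⟩
      refine ⟨j, by omega, ?_, hj ▸ h1⟩
      have := Nat.find_min hex (m := j) (by omega)
      omega
    have e : pre (lims g) r = pref g j ++ (g j).take (r - (pref g j).length) := by
      rw [pre_take g hg (j + 1) r hrj.le, pref, List.take_append, List.take_of_length_le hjr]
    rw [e, dv_append]
    have h1 := hJ1 j (by omega)
    rw [← hdv, ← hlen, Real.norm_natCast] at h1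
    have h2 := hJ2 j (by omega)
    have h3 := dv_norm x ((g j).take (r - (pref g j).length))
    have h4 : (((g j).take (r - (pref g j).length)).length : ℝ) ≤ (g j).length := by
      exact_mod_cast List.length_take_le' _ _
    have h5 : (j : ℝ) ≤ (pref g j).length := by exact_mod_cast pref_length_ge g hg j
    have h6 : ((pref g j).length : ℝ) ≤ r := by exact_mod_cast hjr
    have h7 : C * ((g j).length : ℝ) ≤ ε / 2 * j := by
      have h8 := mul_le_mul_of_nonneg_left h2 hCp.le
      have h9 : C * (ε / 2 / C * j) = ε / 2 * j := by field_simp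
      simp only [g] at *
      linarith
    have h10 := norm_add_le (dv x (pref g j)) (dv x ((g j).take (r - (pref g j).length)))
    have h11 := mul_le_mul_of_nonneg_left h4 hCp.le
    nlinarith
  unfold hasFreq
  rw [tendsto_iff_norm_sub_tendsto_zero, Metric.tendsto_atTop]
  intro ε hε
  obtain ⟨R, hR⟩ := hmain (ε / 2) (by positivity)
  refine ⟨R + 1, fun r hr => ?_⟩
  have h1 := hR r (by omega)
  have hr0 : (0 : ℝ) < r := by exact_mod_cast (by omega : 0 < r)
  have e : (r : ℝ)⁻¹ • birk (lims g) r - x = (r : ℝ)⁻¹ • dv x (pre (lims g) r) := by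
    rw [dv, cnt_pre, pre_length, smul_sub, smul_smul, inv_mul_cancel₀ hr0.ne', one_smul]
  rw [e, norm_smul, norm_inv, Real.norm_natCast, dist_zero_right, norm_mul, norm_inv, Real.norm_natCast,
    norm_norm, inv_mul_lt_iff₀ hr0]
  nlinarith


/-- For every `w ∈ Max`, exactly one of three alternatives holds for
`Λ = DF(w)`: (1) `Λ` is the convex hull of a finite rational set; (2) the extreme
points of `Λ` are infinite with a single accumulation point, which is an irrational
extreme point, all other extreme points being rational polygonal vertices; (3) the
extreme points are infinite with exactly two accumulation points, both irrational
extreme points, all other extreme points being rational polygonal vertices, and the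
segment joining the two accumulation points lies in the boundary of `Λ` relative to the
plane containing `Δ` (its intrinsic frontier). -/
theorem stmt8 (w : Seq3) (hw : w ∈ MaxSet) :
    ∀ Λ : Set (Fin 3 → ℝ), Λ = DF w →
    ∀ E : Set (Fin 3 → ℝ), E = Set.extremePoints ℝ Λ →
    ((∃ F : Finset (Fin 3 → ℝ), (∀ v ∈ F, IsRat v) ∧ Λ = convexHull ℝ (F : Set (Fin 3 → ℝ)))
        ∨
      (E.Infinite ∧ ∃ v, AccPt v (Filter.principal E) ∧
        (∀ v', AccPt v' (Filter.principal E) → v' = v) ∧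
        v ∈ E ∧ ¬ IsRat v ∧
        ∀ u ∈ E \ {v}, IsRat u ∧ IsPolygonalVertex Λ u)
        ∨
      (E.Infinite ∧ ∃ v₁ v₂, v₁ ≠ v₂ ∧
        AccPt v₁ (Filter.principal E) ∧ AccPt v₂ (Filter.principal E) ∧
        (∀ v', AccPt v' (Filter.principal E) → v' = v₁ ∨ v' = v₂) ∧
        v₁ ∈ E ∧ v₂ ∈ E ∧ ¬ IsRat v₁ ∧ ¬ IsRat v₂ ∧
        (∀ u ∈ E \ {v₁, v₂}, IsRat u ∧ IsPolygonalVertex Λ u) ∧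
        segment ℝ v₁ v₂ ⊆ intrinsicFrontier ℝ Λ))
    ∧
    ¬ ((∃ F : Finset (Fin 3 → ℝ), (∀ v ∈ F, IsRat v) ∧
          Λ = convexHull ℝ (F : Set (Fin 3 → ℝ))) ∧ E.Infinite)
    ∧
    ¬ ((∃ v, AccPt v (Filter.principal E) ∧ ∀ v', AccPt v' (Filter.principal E) → v' = v) ∧
        (∃ v₁ v₂, v₁ ≠ v₂ ∧ AccPt v₁ (Filter.principal E) ∧ AccPt v₂ (Filter.principal E))) := by
  intro Λ hΛ E hE
  have hw0 : w 0 = 2 := hw.1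
  have hΛ' : Λ = closure (SS (fun u => QW u w)) :=
    hΛ.trans (Set.Subset.antisymm (DF_sub hw0) (sub_DF hw0))
  refine ⟨?_, ?_, ?_⟩
  · rcases combi (QW_QP hw0) hΛ' (by rw [hΛ']; exact SS_convex (QW_QP hw0)) with h | ⟨n, G⟩
    · exact Or.inl h
    · exact Or.inr (G.main E hE)
  · rintro ⟨⟨F, _, hF⟩, hinf⟩
    apply hinf
    rw [hE, hF]
    exact F.finite_toSet.subset extremePoints_convexHull_subset
  · rintro ⟨⟨v, _, hu⟩, v₁, v₂, hne, h1, h2⟩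
    exact hne ((hu _ h1).trans (hu _ h2).symm)
end

section
/- If w ∈ Max is eventually periodic (i.e. there exist m ≥ 0 and p ≥ 1 with w_{r+p} = w_r for all r ≥ m), then DF(w) is the convex hull of a finite subset of ℚ³ (a polygon with rational vertices). -/
open Filter Topology MeasureTheory

namespace DFproof

noncomputable def ee (d : Fin 3) : Fin 3 → ℝ := fun i => if i = d then 1 else 0

theorem shift_iter (s : Seq3) (n i : ℕ) : (shift^[n] s) i = s (n + i) := by
  induction n generalizing s with
  | zero => simp
  | succ n ih => rw [Function.iterate_succ_apply, ih]; simp only [shift]; congr 1; omega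

theorem birk_succ (s : Seq3) (r : ℕ) : birk s (r+1) = birk s r + ee (s r) := by
  unfold birk
  rw [Finset.sum_range_succ]
  congr 1
  funext i
  simp [kappa, ee, shift_iter]

theorem birk_zero (s : Seq3) : birk s 0 = 0 := by simp [birk]

theorem lex_char {s t : Seq3} (h : lexLe s t) (k : ℕ) (hk : ∀ i, i < k → s i = t i) :
    s k ≤ t k := by
  rcases h with rfl | ⟨n, h1, h2⟩
  · exact le_rfl
  · rcases lt_trichotomy n k with h | h | h
    · exact absurd (hk n h) h2.ne
    · subst h; exact h2.le
    · exact (h1 k h).le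

theorem birk_nat (s : Seq3) (r : ℕ) (i : Fin 3) : ∃ n : ℕ, birk s r i = n := by
  induction r with
  | zero => exact ⟨0, by simp [birk_zero]⟩
  | succ r ih =>
    obtain ⟨n, hn⟩ := ih
    rw [birk_succ]
    by_cases h : i = s r
    · exact ⟨n+1, by simp [hn, ee, h]; rw [← h, hn]⟩
    · exact ⟨n, by simp [hn, ee, h]⟩

noncomputable def Phi (x : Fin 3 → ℝ) : ℝ := x 0 + x 1 + x 2

theorem Phi_ee (d : Fin 3) : Phi (ee d) = 1 := by
  fin_cases d <;> simp [Phi, ee]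

theorem Phi_add (x y) : Phi (x + y) = Phi x + Phi y := by simp [Phi]; ring
theorem Phi_smul (c : ℝ) (y) : Phi (c • y) = c * Phi y := by simp [Phi]; ring

theorem Phi_birk (s : Seq3) (r : ℕ) : Phi (birk s r) = r := by
  induction r with
  | zero => simp [birk_zero, Phi]
  | succ r ih => rw [birk_succ, Phi_add, ih, Phi_ee]; push_cast; ring

theorem birk_per (w : Seq3) (m p : ℕ) (h : ∀ r, m ≤ r → w (r + p) = w r) (j : ℕ) :
    birk w (m + j + p) = birk w (m + j) + (birk w (m + p) - birk w m) := by
  induction j with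
  | zero => simp
  | succ j ih =>
    have e1 : m + (j+1) + p = (m + j + p) + 1 := by ring
    rw [e1, birk_succ, ih, ← add_assoc m j 1, birk_succ w (m+j), h _ (by omega)]
    abel

/-- the cycle words -/
noncomputable def blkV (w : Seq3) (k : ℕ) (d : Fin 3) : Fin 3 → ℝ :=
  ((k : ℝ) + 1)⁻¹ • (birk w k + ee d)
noncomputable def perV (w : Seq3) (m p : ℕ) : Fin 3 → ℝ :=
  (p : ℝ)⁻¹ • (birk w (m + p) - birk w m)

def FS (w : Seq3) (m p : ℕ) : Set (Fin 3 → ℝ) :=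
  insert (perV w m p) {v | ∃ k d, k < m + p ∧ d < w k ∧ v = blkV w k d}

theorem FS_fin (w : Seq3) (m p : ℕ) : (FS w m p).Finite := by
  apply Set.Finite.insert
  apply Set.Finite.subset
    (Set.Finite.image (fun x : ℕ × Fin 3 => blkV w x.1 x.2)
      ((Set.finite_Iio (m+p)).prod (Set.finite_univ (α := Fin 3))))
  rintro v ⟨k, d, hk, hd, rfl⟩
  exact ⟨(k, d), ⟨hk, trivial⟩, rfl⟩

theorem FS_rat (w : Seq3) (m p : ℕ) : ∀ v ∈ FS w m p, IsRat v := by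
  rintro v (rfl | ⟨k, d, hk, hd, rfl⟩) i
  · obtain ⟨a, ha⟩ := birk_nat w (m+p) i
    obtain ⟨b, hb⟩ := birk_nat w m i
    exact ⟨(p:ℚ)⁻¹ * (a - b), by simp [perV, ha, hb]⟩
  · obtain ⟨a, ha⟩ := birk_nat w k i
    exact ⟨((k:ℚ)+1)⁻¹ * (a + if i = d then 1 else 0), by
      simp only [blkV, Pi.smul_apply, Pi.add_apply, ha, ee, smul_eq_mul]; split_ifs <;> simp⟩

theorem upper (w : Seq3) (m p : ℕ) (hp : 1 ≤ p) (h : ∀ r, m ≤ r → w (r + p) = w r) :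
    DF w ⊆ convexHull ℝ (FS w m p) := by
  rintro v ⟨s, hs, hv⟩
  by_contra hcon
  obtain ⟨f, u, h1, h2⟩ := geometric_hahn_banach_closed_point (convex_convexHull ℝ (FS w m p))
    ((FS_fin w m p).isCompact_convexHull (𝕜 := ℝ)).isClosed hcon
  have hF : ∀ a ∈ FS w m p, f a < u := fun a ha => h1 a (subset_convexHull ℝ _ ha)
  set g : (Fin 3 → ℝ) → ℝ := fun x => f x - u * Phi x with hg
  have gadd : ∀ x y, g (x + y) = g x + g y := by
    intro x y; simp only [hg, map_add, Phi_add]; ring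
  have gsmul : ∀ (c : ℝ) y, g (c • y) = c * g y := by
    intro x y; simp only [hg, map_smul, Phi_smul, smul_eq_mul]; ring
  have g0 : g 0 = 0 := by simp [hg, Phi]
  have hp0 : (0:ℝ) < p := by exact_mod_cast hp
  have gblk0 : ∀ k d, k < m + p → d < w k → g (birk w k + ee d) ≤ 0 := by
    intro k d hk hd
    have e : birk w k + ee d = ((k:ℝ)+1) • blkV w k d := by
      have : ((k:ℝ)+1) ≠ 0 := by positivity
      rw [blkV, smul_smul, mul_inv_cancel₀ this, one_smul]
    have hPhi : Phi (blkV w k d) = 1 := by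
      have : ((k:ℝ)+1) ≠ 0 := by positivity
      rw [blkV, Phi_smul, Phi_add, Phi_birk, Phi_ee, inv_mul_cancel₀ this]
    have := hF (blkV w k d) (Or.inr ⟨k, d, hk, hd, rfl⟩)
    rw [e, gsmul]
    apply mul_nonpos_of_nonneg_of_nonpos (by positivity)
    simp only [hg, hPhi]; linarith
  have gper : g (birk w (m+p) - birk w m) ≤ 0 := by
    have e : birk w (m+p) - birk w m = (p:ℝ) • perV w m p := by
      rw [perV, smul_smul, mul_inv_cancel₀ hp0.ne', one_smul]
    have hPhi : Phi (perV w m p) = 1 := by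
      have : Phi (birk w (m+p) - birk w m) = p := by
        have := Phi_add (birk w (m+p) - birk w m) (birk w m)
        rw [sub_add_cancel, Phi_birk, Phi_birk] at this
        push_cast at this; linarith
      rw [perV, Phi_smul, this, inv_mul_cancel₀ hp0.ne']
    have := hF (perV w m p) (Or.inl rfl)
    rw [e, gsmul]
    apply mul_nonpos_of_nonneg_of_nonpos (by positivity)
    simp only [hg, hPhi]; linarith
  have hstep : ∀ k, m + p ≤ k → ∃ j, k = m + j + p ∧
      birk w k = birk w (m + j) + (birk w (m + p) - birk w m) := by
    intro k hk
    refine ⟨k - m - p, by omega, ?_⟩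
    rw [← birk_per w m p h]; congr 1; omega
  have gblk : ∀ k d, d < w k → g (birk w k + ee d) ≤ 0 := by
    intro k
    induction k using Nat.strong_induction_on with
    | _ k ih =>
      intro d hd
      by_cases hk : k < m + p
      · exact gblk0 k d hk hd
      · obtain ⟨j, hj, hb⟩ := hstep k (by omega)
        have := ih (m+j) (by omega) d (by rw [hj, h _ (by omega)] at hd; exact hd)
        rw [gadd] at this
        rw [hb, gadd, gadd]; linarith
  set M := ∑ k ∈ Finset.range (m+p), |g (birk w k)| with hM
  have gM : ∀ k, g (birk w k) ≤ M := by
    intro k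
    induction k using Nat.strong_induction_on with
    | _ k ih =>
      by_cases hk : k < m + p
      · exact (le_abs_self _).trans (Finset.single_le_sum (f := fun k => |g (birk w k)|)
          (fun _ _ => abs_nonneg _) (Finset.mem_range.2 hk))
      · obtain ⟨j, hj, hb⟩ := hstep k (by omega)
        have := ih (m+j) (by omega)
        rw [hb, gadd]; linarith
  have key : ∀ r, ∃ a k, r = a + k ∧ (∀ i, i < k → s (a + i) = w i) ∧
      g (birk s r) ≤ g (birk w k) := by
    intro r
    induction r with
    | zero => exact ⟨0, 0, rfl, by simp, by simp [birk_zero]⟩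
    | succ r ih =>
      obtain ⟨a, k, hr, hk, hgk⟩ := ih
      have hle : s (a + k) ≤ w k := by
        have := lex_char (hs a) k (by intro i hi; rw [shift_iter]; exact hk i hi)
        rwa [shift_iter] at this
      rcases hle.lt_or_eq with hlt | heq
      · refine ⟨r+1, 0, rfl, by simp, ?_⟩
        have := gblk k _ hlt
        rw [gadd] at this
        rw [birk_succ, gadd, birk_zero, g0, hr]
        rw [hr] at hgk; linarith
      · refine ⟨a, k+1, by omega, ?_, ?_⟩
        · intro i hi
          rcases Nat.lt_succ_iff_lt_or_eq.1 hi with hi | rfl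
          · exact hk i hi
          · exact heq
        · rw [birk_succ, birk_succ, gadd, gadd, ← heq, hr]
          rw [hr] at hgk; linarith
  have gcont : Continuous g := by
    simp only [hg, Phi]; fun_prop
  have Phicont : Continuous Phi := by unfold Phi; fun_prop
  have hPv : Phi v = 1 := by
    have t1 := (Phicont.tendsto v).comp hv
    refine tendsto_nhds_unique t1 ?_
    refine Tendsto.congr' ?_ tendsto_const_nhds
    filter_upwards [eventually_gt_atTop 0] with r hr
    have : (r:ℝ) ≠ 0 := by positivity
    simp [Phi_smul, Phi_birk, this]
  have hgv : g v ≤ 0 := by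
    have t1 := (gcont.tendsto v).comp hv
    have t2 : Tendsto (fun r : ℕ => (r:ℝ)⁻¹ * M) atTop (nhds 0) := by
      simpa using (tendsto_inv_atTop_zero.comp tendsto_natCast_atTop_atTop).mul_const M
    refine le_of_tendsto_of_tendsto' t1 t2 ?_
    intro r
    obtain ⟨a, k, -, -, hk⟩ := key r
    simp only [Function.comp, gsmul]
    exact mul_le_mul_of_nonneg_left (hk.trans (gM k)) (by positivity)
  simp only [hg, hPv] at hgv
  linarith

/-- decisive strict inequality -/
def Blw (w : Seq3) : List (Fin 3) → ℕ → Prop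
  | [], _ => False
  | a :: t, k => a < w k ∨ (a = w k ∧ Blw w t (k+1))

def Good (w : Seq3) : List (Fin 3) → Prop
  | [] => True
  | a :: t => Blw w (a :: t) 0 ∧ Good w t

noncomputable def cnt (l : List (Fin 3)) : Fin 3 → ℝ := (l.map ee).sum

theorem cnt_append (l l') : cnt (l ++ l') = cnt l + cnt l' := by simp [cnt]

theorem Blw_append (w : Seq3) (l l' : List (Fin 3)) (k : ℕ) (h : Blw w l k) :
    Blw w (l ++ l') k := by
  induction l generalizing k with
  | nil => exact h.elim
  | cons a t ih => exact h.imp id (fun h => ⟨h.1, ih _ h.2⟩)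

theorem Good_append (w : Seq3) (l l' : List (Fin 3)) (h : Good w l) (h' : Good w l') :
    Good w (l ++ l') := by
  induction l with
  | nil => exact h'
  | cons a t ih => exact ⟨Blw_append w _ _ _ h.1, ih h.2⟩

/-- `w_j ... w_{j+n-1} d` -/
def seg (w : Seq3) (d : Fin 3) : ℕ → ℕ → List (Fin 3)
  | _, 0 => [d]
  | j, n+1 => w j :: seg w d (j+1) n

theorem seg_len (w d j n) : (seg w d j n).length = n + 1 := by
  induction n generalizing j with
  | zero => rfl
  | succ n ih => simp [seg, ih]

theorem seg_cnt (w d j n) : birk w j + cnt (seg w d j n) = birk w (j+n) + ee d := by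
  induction n generalizing j with
  | zero => simp [seg, cnt]
  | succ n ih =>
    have := ih (j+1)
    rw [birk_succ] at this
    rw [show j + (n+1) = j + 1 + n by ring, ← this]
    simp [seg, cnt, add_assoc]

theorem seg_Blw (w : Seq3) (hw : w ∈ MaxSet) (d : Fin 3) (a n k : ℕ)
    (hd : d < w (a + k + n)) (hm : ∀ i, i < k → w (a + i) = w i) :
    Blw w (seg w d (a + k) n) k := by
  induction n generalizing k with
  | zero =>
    left
    have := lex_char (hw.2 a) k (by intro i hi; rw [shift_iter]; exact hm i hi)
    rw [shift_iter] at this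
    exact lt_of_lt_of_le hd this
  | succ n ih =>
    have := lex_char (hw.2 a) k (by intro i hi; rw [shift_iter]; exact hm i hi)
    rw [shift_iter] at this
    rcases this.lt_or_eq with h | h
    · left; exact h
    · right
      refine ⟨h, ?_⟩
      apply ih (k+1) (by rw [show a + (k+1) + n = a + k + (n+1) by ring]; exact hd)
      intro i hi
      rcases Nat.lt_succ_iff_lt_or_eq.1 hi with hi | rfl
      · exact hm i hi
      · exact h

theorem seg_Good (w : Seq3) (hw : w ∈ MaxSet) (d : Fin 3) (a n : ℕ)
    (hd : d < w (a + n)) : Good w (seg w d a n) := by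
  induction n generalizing a with
  | zero => exact ⟨seg_Blw w hw d a 0 0 hd (by simp), trivial⟩
  | succ n ih =>
    exact ⟨seg_Blw w hw d a (n+1) 0 hd (by simp),
      ih (a+1) (by rw [show a + 1 + n = a + (n+1) by ring]; exact hd)⟩

def Appr (w : Seq3) (v : Fin 3 → ℝ) : Prop :=
  ∃ C : ℝ, ∀ x : ℝ, 0 ≤ x → ∃ l, Good w l ∧ ‖cnt l - x • v‖ ≤ C ∧
    x ≤ l.length ∧ (l.length : ℝ) ≤ x + C

theorem Appr_convex (w : Seq3) : Convex ℝ {v | Appr w v} := by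
  rintro v ⟨C, hC⟩ v' ⟨C', hC'⟩ a b ha hb hab
  refine ⟨C + C', fun x hx => ?_⟩
  obtain ⟨l, h1, h2, h3, h4⟩ := hC (x * a) (by positivity)
  obtain ⟨l', h1', h2', h3', h4'⟩ := hC' (x * b) (by positivity)
  have hx : x = x * a + x * b := by rw [← mul_add, hab, mul_one]
  refine ⟨l ++ l', Good_append w _ _ h1 h1', ?_, ?_, ?_⟩
  · have : cnt (l ++ l') - x • (a • v + b • v') =
        (cnt l - (x*a) • v) + (cnt l' - (x * b) • v') := by
      rw [cnt_append, smul_add, smul_smul, smul_smul]; abel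
    rw [this]
    exact (norm_add_le _ _).trans (add_le_add h2 h2')
  · rw [List.length_append]; push_cast; linarith
  · rw [List.length_append]; push_cast; linarith

/-- a family of words with linear counts -/
theorem Appr_of (w : Seq3) (c q : Fin 3 → ℝ) (L b : ℕ) (hL : 1 ≤ L) (W : ℕ → List (Fin 3))
    (hW : ∀ n, Good w (W n)) (hc : ∀ n : ℕ, cnt (W n) = c + (n:ℝ) • q)
    (hl : ∀ n, (W n).length = b + n * L) : Appr w ((L:ℝ)⁻¹ • q) := by
  have hL0 : (0:ℝ) < L := by exact_mod_cast hL
  refine ⟨‖c‖ + ‖q‖ + b + L, fun x hx => ?_⟩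
  have n1 : x / L ≤ ⌈x / L⌉₊ := Nat.le_ceil _
  have n2 : (⌈x / L⌉₊ : ℝ) < x / L + 1 := Nat.ceil_lt_add_one (by positivity)
  have m1 := mul_le_mul_of_nonneg_right n1 hL0.le
  have m2 := mul_le_mul_of_nonneg_right n2.le hL0.le
  rw [add_mul, div_mul_cancel₀ _ hL0.ne'] at m2
  rw [div_mul_cancel₀ _ hL0.ne'] at m1
  have := norm_nonneg c
  have := norm_nonneg q
  have : (0:ℝ) ≤ b := by positivity
  refine ⟨W ⌈x / L⌉₊, hW _, ?_, ?_, ?_⟩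
  · have : cnt (W ⌈x / L⌉₊) - x • (L:ℝ)⁻¹ • q = c + ((⌈x / L⌉₊:ℝ) - x / L) • q := by
      rw [hc, smul_smul, sub_smul, div_eq_mul_inv]; abel
    rw [this]
    refine (norm_add_le _ _).trans ?_
    rw [norm_smul, Real.norm_eq_abs]
    have : |(⌈x / L⌉₊:ℝ) - x / L| ≤ 1 := by rw [abs_le]; constructor <;> linarith
    have := mul_le_mul_of_nonneg_right this (norm_nonneg q)
    linarith
  · rw [hl]; push_cast; linarith
  · rw [hl]; push_cast; linarith

theorem Appr_blk (w : Seq3) (hw : w ∈ MaxSet) (k : ℕ) (d : Fin 3) (hd : d < w k) :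
    Appr w (blkV w k d) := by
  have hc : cnt (seg w d 0 k) = birk w k + ee d := by
    have := seg_cnt w d 0 k
    simpa [birk_zero] using this
  have := Appr_of w 0 (birk w k + ee d) (k+1) 0 (by omega)
    (fun n => Nat.rec [] (fun _ l => seg w d 0 k ++ l) n) ?_ ?_ ?_
  · simpa [blkV] using this
  · intro n
    induction n with
    | zero => trivial
    | succ n ih => exact Good_append w _ _ (seg_Good w hw d 0 k (by simpa using hd)) ih
  · intro n
    induction n with
    | zero => simp [cnt]
    | succ n ih =>
      simp only [cnt_append, ih, hc]
      push_cast
      rw [add_smul, one_smul]; abel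
  · intro n
    induction n with
    | zero => simp
    | succ n ih =>
      simp only [List.length_append, ih, seg_len]; ring

theorem birk_per_mul (w : Seq3) (m p : ℕ) (h : ∀ r, m ≤ r → w (r + p) = w r) (j n : ℕ) :
    birk w (m + j + n * p) = birk w (m + j) + (n:ℝ) • (birk w (m + p) - birk w m) := by
  induction n with
  | zero => simp
  | succ n ih =>
    rw [show m + j + (n+1) * p = m + (j + n * p) + p by ring, birk_per w m p h,
      ← add_assoc m, ih]
    push_cast
    rw [add_smul, one_smul]; abel

theorem Appr_per (w : Seq3) (hw : w ∈ MaxSet) (m p : ℕ) (hp : 1 ≤ p)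
    (h : ∀ r, m ≤ r → w (r + p) = w r) : Appr w (perV w m p) := by
  by_cases hz : ∃ j, 0 < w (m + j)
  · obtain ⟨j, hj⟩ := hz
    have hwn : ∀ n, w (m + j + n * p) = w (m + j) := by
      intro n
      induction n with
      | zero => simp
      | succ n ih =>
        rw [show m + j + (n+1) * p = m + j + n * p + p by ring, h _ (by nlinarith), ih]
    refine Appr_of w (birk w (m + j) + ee 0) (birk w (m+p) - birk w m) p (m + j + 1) hp
      (fun n => seg w 0 0 (m + j + n * p)) ?_ ?_ ?_
    · intro n
      apply seg_Good w hw
      rw [zero_add, hwn]; exact hj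
    · intro n
      have := seg_cnt w 0 0 (m + j + n * p)
      rw [birk_zero, zero_add, zero_add, birk_per_mul w m p h] at this
      rw [this]; abel
    · intro n; rw [seg_len]; ring
  · push Not at hz
    have hz' : ∀ j, w (m + j) = 0 := fun j => by simpa using hz j
    have : ∀ n : ℕ, birk w (m + n) - birk w m = (n:ℝ) • ee 0 := by
      intro n
      induction n with
      | zero => simp
      | succ n ih =>
        rw [← add_assoc, birk_succ, hz', add_sub_right_comm, ih]
        push_cast
        rw [add_smul, one_smul]
    have hp0 : (p:ℝ) ≠ 0 := by positivity
    have e : perV w m p = blkV w 0 0 := by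
      rw [perV, this, smul_smul, inv_mul_cancel₀ hp0]
      simp [blkV, birk_zero]
    rw [e]
    apply Appr_blk w hw
    rw [hw.1]; decide

theorem Blw_spec (w : Seq3) (l : List (Fin 3)) (k : ℕ) (h : Blw w l k) :
    ∃ n, ∃ hn : n < l.length, (∀ i (hi : i < n), l[i] = w (k + i)) ∧ l[n] < w (k + n) := by
  induction l generalizing k with
  | nil => exact h.elim
  | cons a t ih =>
    rcases h with h | ⟨h, h'⟩
    · exact ⟨0, by simp, by simp, by simpa using h⟩
    · obtain ⟨n, hn, h1, h2⟩ := ih _ h'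
      refine ⟨n+1, by simpa using hn, ?_, ?_⟩
      · intro i hi
        cases i with
        | zero => simpa using h
        | succ i =>
          have := h1 i (by omega)
          simp only [List.getElem_cons_succ, this]; congr 1; omega
      · simp only [List.getElem_cons_succ]
        rw [show k + (n+1) = k + 1 + n by ring]; exact h2

theorem Good_drop (w : Seq3) (l : List (Fin 3)) (h : Good w l) (r : ℕ) (hr : r < l.length) :
    Blw w (l.drop r) 0 := by
  induction r generalizing l with
  | zero =>
    cases l with
    | nil => simp at hr
    | cons a t => exact h.1
  | succ r ih =>
    cases l with
    | nil => simp at hr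
    | cons a t => exact ih t h.2 (by simpa using hr)

theorem cnt_birk (s : Seq3) (l : List (Fin 3)) (h : ∀ i (hi : i < l.length), s i = l[i]) :
    birk s l.length = cnt l := by
  induction l using List.reverseRecOn with
  | nil => simp [birk_zero, cnt]
  | append_singleton l a ih =>
    have h1 := ih (fun i hi => by
      rw [h i (by simp; omega)]; simp [List.getElem_append_left hi])
    rw [List.length_append, List.length_singleton, birk_succ, h1, cnt_append]
    congr 1
    rw [h l.length (by simp)]
    simp [cnt]

theorem norm_ee (d : Fin 3) : ‖ee d‖ ≤ 1 := by
  rw [pi_norm_le_iff_of_nonneg zero_le_one]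
  intro i; unfold ee; split_ifs <;> simp

theorem Appr_DF (w : Seq3) (v : Fin 3 → ℝ) (hv : Appr w v) : v ∈ DF w := by
  obtain ⟨C, hC⟩ := hv
  choose S hS1 hS2 hS3 hS4 using fun j : ℕ => hC ((j:ℝ) + 1) (by positivity)
  have hC0 : 0 ≤ C := (norm_nonneg _).trans (hS2 0)
  let P : ℕ → List (Fin 3) := fun n => Nat.rec [] (fun j l => l ++ S j) n
  have hP0 : P 0 = [] := rfl
  have hPs : ∀ j, P (j+1) = P j ++ S j := fun j => rfl
  have hPG : ∀ j, Good w (P j) := by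
    intro j
    induction j with
    | zero => trivial
    | succ j ih => exact Good_append w _ _ ih (hS1 j)
  have hPl : ∀ j : ℕ, ((j:ℝ))^2 / 2 ≤ (P j).length := by
    intro j
    induction j with
    | zero => simp [hP0]
    | succ j ih =>
      rw [hPs, List.length_append]; push_cast
      have := hS3 j
      nlinarith
  have hPj : ∀ j : ℕ, j ≤ (P j).length := by
    intro j
    induction j with
    | zero => simp
    | succ j ih =>
      rw [hPs, List.length_append]
      have : (1:ℝ) ≤ (S j).length := by have := hS3 j; have : (0:ℝ) ≤ j := by positivity
                                        linarith
      have : 1 ≤ (S j).length := by exact_mod_cast this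
      omega
  have hpre : ∀ i j, i ≤ j → P i <+: P j := by
    intro i j hij
    induction hij with
    | refl => exact List.prefix_rfl
    | step _ ih => exact ih.trans (by rw [Nat.succ_eq_add_one, hPs]; exact List.prefix_append _ _)
  let s : Seq3 := fun n => (P (n+1))[n]'(hPj (n+1))
  have hs : ∀ j i (hi : i < (P j).length), s i = (P j)[i] := by
    intro j i hi
    rcases le_total (i+1) j with h | h
    · exact (hpre _ _ h).getElem _
    · exact ((hpre _ _ h).getElem hi).symm
  refine ⟨s, ?_, ?_⟩
  · intro r
    right
    have hr : r < (P (r+1)).length := hPj (r+1)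
    obtain ⟨n, hn, h1, h2⟩ := Blw_spec w _ 0 (Good_drop w _ (hPG (r+1)) r hr)
    have hn' : r + n < (P (r+1)).length := by rw [List.length_drop] at hn; omega
    refine ⟨n, ?_, ?_⟩
    · intro i hi
      rw [shift_iter, hs (r+1) (r+i) (by omega)]
      simpa using h1 i hi
    · rw [shift_iter, hs (r+1) (r+n) hn']
      simpa using h2
  · set D : ℕ → Fin 3 → ℝ := fun r => birk s r - (r:ℝ) • v with hD
    set V := 1 + ‖v‖ with hV
    have hV0 : 0 ≤ V := by positivity
    have hDstep : ∀ r n, ‖D (r + n)‖ ≤ ‖D r‖ + n * V := by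
      intro r n
      induction n with
      | zero => simp
      | succ n ih =>
        have e : D (r + (n+1)) = D (r+n) + (ee (s (r+n)) - v) := by
          simp only [hD]
          rw [← add_assoc, birk_succ]; push_cast
          rw [add_smul _ (1:ℝ), one_smul]; abel
        rw [e]
        have a1 := norm_add_le (D (r+n)) (ee (s (r+n)) - v)
        have a2 := norm_sub_le (ee (s (r+n))) v
        have a3 := norm_ee (s (r+n))
        push_cast; linarith
    -- error at stage ends
    have hstage : ∀ j : ℕ, ‖D (P j).length‖ ≤ j * (C + C * ‖v‖) := by
      intro j
      have hDP : ∀ j, D (P j).length = cnt (P j) - ((P j).length : ℝ) • v := by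
        intro j; simp only [hD]; rw [cnt_birk s (P j) (hs j)]
      induction j with
      | zero => simp [hP0, hD, birk_zero]
      | succ j ih =>
        rw [hDP j] at ih
        rw [hDP (j+1)]
        have e : cnt (P (j+1)) - ((P (j+1)).length : ℝ) • v =
            (cnt (P j) - ((P j).length : ℝ) • v) + ((cnt (S j) - ((j:ℝ)+1) • v)
              - (((S j).length : ℝ) - ((j:ℝ)+1)) • v) := by
          rw [hPs, cnt_append, List.length_append]; push_cast
          simp only [add_smul, sub_smul]; abel
        rw [e]
        refine (norm_add_le _ _).trans ?_
        have a1 := norm_sub_le (cnt (S j) - ((j:ℝ)+1) • v) ((((S j).length : ℝ) - ((j:ℝ)+1)) • v)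
        rw [norm_smul, Real.norm_eq_abs, abs_of_nonneg (by linarith [hS3 j])] at a1
        have a2 : (((S j).length : ℝ) - ((j:ℝ)+1)) * ‖v‖ ≤ C * ‖v‖ :=
          mul_le_mul_of_nonneg_right (by linarith [hS4 j]) (norm_nonneg v)
        have := hS2 j
        push_cast; linarith
    set A := (C + C * ‖v‖) + (1 + C) * V with hA
    have hA0 : 0 ≤ A := by positivity
    have hbd : ∀ r : ℕ, ‖D r‖ ≤ A * (Real.sqrt (2 * r) + 1) := by
      intro r
      have hex : ∃ j, (P j).length ≤ r ∧ r < (P (j+1)).length := by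
        by_contra hcon
        push Not at hcon
        have : ∀ j, (P j).length ≤ r := by
          intro j
          induction j with
          | zero => simp [hP0]
          | succ j ih => exact hcon j ih
        have := this (r+1)
        have := hPj (r+1)
        omega
      obtain ⟨j, h1, h2⟩ := hex
      obtain ⟨n, rfl⟩ := Nat.exists_eq_add_of_le h1
      rw [hPs, List.length_append] at h2
      have hn : (n:ℝ) ≤ j + 1 + C := by
        have : (n:ℝ) ≤ (S j).length := by exact_mod_cast (by omega : n ≤ (S j).length)
        linarith [hS4 j]
      have hj : (j:ℝ) ≤ Real.sqrt (2 * (((P j).length + n : ℕ):ℝ)) := by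
        apply Real.le_sqrt_of_sq_le
        push_cast
        have := hPl j
        have : (0:ℝ) ≤ n := by positivity
        linarith
      have b1 := hDstep (P j).length n
      have b2 := hstage j
      have b3 := mul_le_mul_of_nonneg_right hn hV0
      have b4 := mul_le_mul_of_nonneg_left hj hA0
      have hj0 : (0:ℝ) ≤ j := by positivity
      have b5 : 0 ≤ (j:ℝ) * (C * V) := by positivity
      have b6 : 0 ≤ C + C * ‖v‖ := by positivity
      rw [mul_add, mul_one]
      have : j * (C + C * ‖v‖) + (j + 1 + C) * V ≤ A * j + A := by rw [hA]; nlinarith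
      linarith
    have hlim : Tendsto (fun r : ℕ => (r:ℝ)⁻¹ * (A * (Real.sqrt (2 * r) + 1))) atTop (nhds 0) := by
      have t1 : Tendsto (fun r : ℕ => (r:ℝ)⁻¹) atTop (nhds 0) :=
        tendsto_inv_atTop_zero.comp tendsto_natCast_atTop_atTop
      have t2 : Tendsto (fun r : ℕ => Real.sqrt (2 * (r:ℝ)⁻¹)) atTop (nhds 0) := by
        have := (Real.continuous_sqrt.tendsto _).comp (t1.const_mul 2)
        simpa [Function.comp_def] using this
      have t3 := (t2.const_mul A).add (t1.const_mul A)
      simp only [mul_zero, add_zero] at t3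
      refine t3.congr' ?_
      filter_upwards [eventually_gt_atTop 0] with r hr
      have hr0 : (0:ℝ) < r := by exact_mod_cast hr
      have : Real.sqrt (2 * (r:ℝ)⁻¹) = (r:ℝ)⁻¹ * Real.sqrt (2 * r) := by
        rw [show 2 * (r:ℝ)⁻¹ = ((r:ℝ)⁻¹)^2 * (2 * r) by field_simp,
          Real.sqrt_mul (by positivity), Real.sqrt_sq (by positivity)]
      rw [this]; ring
    unfold hasFreq
    rw [tendsto_iff_norm_sub_tendsto_zero]
    refine squeeze_zero' (Eventually.of_forall fun _ => norm_nonneg _) ?_ hlim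
    filter_upwards [eventually_gt_atTop 0] with r hr
    have hr0 : (0:ℝ) < r := by exact_mod_cast hr
    have : (r:ℝ)⁻¹ • birk s r - v = (r:ℝ)⁻¹ • D r := by
      simp only [hD]
      rw [smul_sub, smul_smul, inv_mul_cancel₀ hr0.ne', one_smul]
    rw [this, norm_smul, Real.norm_eq_abs, abs_of_pos (by positivity)]
    exact mul_le_mul_of_nonneg_left (hbd r) (by positivity)

end DFproof

/-- If `w ∈ Max` is eventually periodic then `DF(w)` is the convex hull
of a finite set of rational points (a polygon with rational vertices). -/
theorem stmt9 (w : Seq3) (hw : w ∈ MaxSet)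
    (hper : ∃ (m p : ℕ), 1 ≤ p ∧ ∀ r, m ≤ r → w (r + p) = w r) :
    ∃ F : Finset (Fin 3 → ℝ), (∀ v ∈ F, IsRat v) ∧ DF w = convexHull ℝ (F : Set (Fin 3 → ℝ)) := by
  obtain ⟨m, p, hp, h⟩ := hper
  refine ⟨(DFproof.FS_fin w m p).toFinset, ?_, ?_⟩
  · intro v hv
    exact DFproof.FS_rat w m p v (by simpa using hv)
  · rw [Set.Finite.coe_toFinset]
    apply Set.Subset.antisymm (DFproof.upper w m p hp h)
    have : convexHull ℝ (DFproof.FS w m p) ⊆ {v | DFproof.Appr w v} := by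
      apply convexHull_min _ (DFproof.Appr_convex w)
      rintro v (rfl | ⟨k, d, hk, hd, rfl⟩)
      · exact DFproof.Appr_per w hw m p hp h
      · exact DFproof.Appr_blk w hw k d hd
    exact fun v hv => DFproof.Appr_DF w v (this hv)
end
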